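/- arXiv:1105.1529 — 11 statements merged into one kernel-verified Lean document; each statement's English description precedes it below -/
import Mathlib

section
/- Let (V, m, τ) be a stable translation quiver which is connected, in the sense that the equivalence relation on V generated by the pairs {(y,z) : m(y,z) ≠ 0} relates any two vertices, and which has at least one arrow, i.e. m(y₀,z₀) ≠ 0 for some y₀, z₀ ∈ V. If f : V → ℤ is both additive and cluster-additive, then f(x) ≥ 0 for every x ∈ V. -/
/-- `f` is cluster-additive on the stable translation quiver with vertex set `V`,
arrow-multiplicity function `m` and translation `τ`. -/
def ClusterAdditive {V : Type*} (m : V → V → ℕ) (τ : V ≃ V) (f : V → ℤ) : Prop :=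
  ∀ z, f z + f (τ z) = ∑ᶠ y, (m y z : ℤ) * max (f y) 0

/-- `f` is additive on the stable translation quiver with vertex set `V`,
arrow-multiplicity function `m` and translation `τ`. -/
def AdditiveFn {V : Type*} (m : V → V → ℕ) (τ : V ≃ V) (f : V → ℤ) : Prop :=
  ∀ z, f z + f (τ z) = ∑ᶠ y, (m y z : ℤ) * f y

/-!
The right-hand sides of the additivity and cluster-additivity equations at `z` agree, while
`m y z * f y ≤ m y z * max (f y) 0` for every `y`. Hence equality holds term by term, and `f` is
nonnegative at the source of every arrow. The arrows `τ z ⟶ y` matching the arrows `y ⟶ z` turn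
targets of arrows into sources, so connectedness makes every vertex a source.
-/

open Function Relation

section FinsumInequalities

variable {ι : Type*}

theorem finsum_eq_finsum_iff_of_le {M : Type*} [AddCommMonoid M] [PartialOrder M]
    [IsOrderedCancelAddMonoid M] {f g : ι → M} (hf : f.HasFiniteSupport)
    (hg : g.HasFiniteSupport) (hle : f ≤ g) : ∑ᶠ i, f i = ∑ᶠ i, g i ↔ f = g := by
  refine ⟨fun hsum ↦ ?_, fun h ↦ by rw [h]⟩
  have hfin : (support f ∪ support g).Finite := hf.union hg
  rw [finsum_eq_sum_of_support_subset f (s := hfin.toFinset) (by simp),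
    finsum_eq_sum_of_support_subset g (s := hfin.toFinset) (by simp),
    Finset.sum_eq_sum_iff_of_le fun i _ ↦ hle i] at hsum
  funext i
  by_cases hi : i ∈ support f ∪ support g
  · exact hsum i (hfin.mem_toFinset.mpr hi)
  · rw [Set.mem_union, not_or, notMem_support, notMem_support] at hi
    rw [hi.1, hi.2]

theorem nonneg_of_finsum_mul_eq_finsum_mul_max {R : Type*} [Semiring R] [LinearOrder R]
    [IsStrictOrderedRing R] {w g : ι → R} (hw : w.HasFiniteSupport) (hw₀ : 0 ≤ w)
    (h : ∑ᶠ i, w i * g i = ∑ᶠ i, w i * max (g i) 0) {i : ι} (hi : w i ≠ 0) : 0 ≤ g i := by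
  have hle : (fun i ↦ w i * g i) ≤ fun i ↦ w i * max (g i) 0 :=
    fun i ↦ mul_le_mul_of_nonneg_left (le_max_left _ _) (hw₀ i)
  have heq : w i * g i = w i * max (g i) 0 :=
    congrFun ((finsum_eq_finsum_iff_of_le (hw.mul_left _) (hw.mul_left _) hle).mp h) i
  have hmax : max (g i) 0 ≤ g i := le_of_mul_le_mul_left heq.ge ((hw₀ i).lt_of_ne' hi)
  exact (le_max_right _ _).trans hmax

end FinsumInequalities

theorem exists_rel_iff_of_eqvGen {α : Type*} {r : α → α → Prop}
    (hr : ∀ a b, r a b → ∃ c, r b c) {a b : α} (hab : EqvGen r a b) :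
    (∃ c, r a c) ↔ ∃ c, r b c := by
  induction hab with
  | rel a b hab => exact ⟨fun _ ↦ hr a b hab, fun _ ↦ ⟨b, hab⟩⟩
  | refl a => exact Iff.rfl
  | symm a b _ ih => exact ih.symm
  | trans a b c _ _ ihab ihbc => exact ihab.trans ihbc

section TranslationQuiver

variable {V : Type*} {m : V → V → ℕ} {τ : V ≃ V}

theorem multiplicity_translation_symm (hτ : ∀ y z, m (τ z) y = m y z) (y z : V) :
    m z (τ.symm y) = m y z := by
  rw [← hτ, τ.apply_symm_apply]

theorem exists_arrow_from_of_connected (hτ : ∀ y z, m (τ z) y = m y z)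
    (hconn : ∀ x x' : V, EqvGen (fun y z ↦ m y z ≠ 0) x x') (harrow : ∃ y₀ z₀, m y₀ z₀ ≠ 0)
    (x : V) : ∃ z, m x z ≠ 0 := by
  obtain ⟨y₀, hy₀⟩ := harrow
  have target_is_source (y z : V) (hyz : m y z ≠ 0) : ∃ w, m z w ≠ 0 :=
    ⟨τ.symm y, (multiplicity_translation_symm hτ y z).trans_ne hyz⟩
  exact (exists_rel_iff_of_eqvGen target_is_source (hconn y₀ x)).mp hy₀

theorem stmt_0_general {x z : V} (hfin : {y | m y z ≠ 0}.Finite) (hxz : m x z ≠ 0)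
    {f : V → ℤ} (hadd : AdditiveFn m τ f) (hca : ClusterAdditive m τ f) : 0 ≤ f x := by
  have hsupp : HasFiniteSupport fun y ↦ (m y z : ℤ) :=
    hfin.subset fun y hy ↦ Nat.cast_ne_zero.mp hy
  have hsum : ∑ᶠ y, (m y z : ℤ) * f y = ∑ᶠ y, (m y z : ℤ) * max (f y) 0 :=
    (hadd z).symm.trans (hca z)
  exact nonneg_of_finsum_mul_eq_finsum_mul_max hsupp (fun y ↦ Nat.cast_nonneg (m y z)) hsum
    (Nat.cast_ne_zero.mpr hxz)

end TranslationQuiver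

theorem stmt_0 {V : Type*} (m : V → V → ℕ) (τ : V ≃ V)
    (hfin : ∀ z, {y | m y z ≠ 0}.Finite)
    (hτ : ∀ y z, m (τ z) y = m y z)
    (hconn : ∀ x x' : V, Relation.EqvGen (fun y z => m y z ≠ 0) x x')
    (harrow : ∃ y₀ z₀, m y₀ z₀ ≠ 0)
    (f : V → ℤ) (hadd : AdditiveFn m τ f) (hca : ClusterAdditive m τ f) :
    ∀ x, 0 ≤ f x := by
  intro x
  obtain ⟨z, hxz⟩ := exists_arrow_from_of_connected hτ hconn harrow x
  exact stmt_0_general (hfin z) hxz hadd hca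
end

section
/- Let n ≥ 1 and let f be a cluster-additive function on ℤA_n with f(v) ≥ 0 for all vertices v. Then f is the zero function. -/
/-- A function on the vertices of `ℤA_n` (pairs `(i,p)` with `1 ≤ p ≤ n`) is
cluster-additive if every mesh relation holds, where `t⁺ = max t 0`. -/
def ZAClusterAdditive (n : ℤ) (f : ℤ × ℤ → ℤ) : Prop :=
  ∀ i p : ℤ, 1 ≤ p → p ≤ n →
    f (i, p) + f (i - 1, p) =
      (if 2 ≤ p then max (f (i, p - 1)) 0 else 0) +
      (if p ≤ n - 1 then max (f (i - 1, p + 1)) 0 else 0)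

/-!
On a nonnegative function the positive parts disappear and the mesh relations become linear.
Extended by zero to the rows `0` and `n + 1`, such a function satisfies
`g (i, p + 1) - g (i, p) = g (i + 1, p) - g (i + 1, p - 1) = ⋯ = g (i + p, 1)`, so `g (i, p)` is the
sum of `p` consecutive values on row `1`. A full sum of `n + 1` consecutive values lies on row
`n + 1` and vanishes; cutting it after `p` terms gives `g (i, p) + g (i + p, n + 1 - p) = 0`.
Two nonnegative terms with sum zero are zero.
-/

/-- Additive functions on `ℤA_n`, written as infinite strips: `g i p` is the value at the vertex
`(i, p)` for `1 ≤ p ≤ n`, the strip is bordered by the zero rows `0` and `n + 1`, and the linear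
mesh relations hold. The mesh ending at `(i + 1, p + 1)` is indexed by `(i, p)`, which avoids
truncated subtraction. Values `g i p` with `p > n + 1` are unconstrained. -/
structure IsAdditiveFrieze {G : Type*} [AddCommGroup G] (n : ℕ) (g : ℤ → ℕ → G) : Prop where
  row_zero : ∀ i, g i 0 = 0
  row_last : ∀ i, g i (n + 1) = 0
  mesh : ∀ i, ∀ p < n, g (i + 1) (p + 1) + g i (p + 1) = g (i + 1) p + g i (p + 2)

namespace IsAdditiveFrieze

section AddCommGroup

variable {G : Type*} [AddCommGroup G] {n : ℕ} {g : ℤ → ℕ → G}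

theorem succ_eq_add (hg : IsAdditiveFrieze n g) (i : ℤ) {p : ℕ} (hp : p ≤ n) :
    g i (p + 1) = g i p + g (i + p) 1 := by
  induction p generalizing i with
  | zero => simp [hg.row_zero]
  | succ p ih =>
    have hdiag : g (i + 1) (p + 1) = g (i + 1) p + g (i + (p + 1 : ℕ)) 1 := by
      rw [ih (i + 1) (by lia), Nat.cast_succ, add_assoc, add_comm 1]
    have hmesh := hg.mesh i p hp
    rw [hdiag, add_assoc, add_right_inj] at hmesh
    rw [← hmesh, add_comm]

theorem eq_sum_row_one (hg : IsAdditiveFrieze n g) (i : ℤ) {p : ℕ} (hp : p ≤ n + 1) :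
    g i p = ∑ j ∈ Finset.range p, g (i + j) 1 := by
  induction p with
  | zero => simp [hg.row_zero]
  | succ p ih => rw [hg.succ_eq_add i (by lia), ih (by lia), Finset.sum_range_succ]

theorem add_shift_eq (hg : IsAdditiveFrieze n g) (i : ℤ) {p q : ℕ} (hpq : p + q ≤ n + 1) :
    g i p + g (i + p) q = g i (p + q) := by
  rw [hg.eq_sum_row_one i (by lia), hg.eq_sum_row_one (i + p) (by lia), hg.eq_sum_row_one i hpq,
    Finset.sum_range_add]
  simp only [Nat.cast_add, add_assoc]

theorem add_glide_reflection_eq_zero (hg : IsAdditiveFrieze n g) (i : ℤ) {p : ℕ}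
    (hp : p ≤ n + 1) : g i p + g (i + p) (n + 1 - p) = 0 := by
  rw [hg.add_shift_eq i (by lia), Nat.add_sub_of_le hp, hg.row_last]

end AddCommGroup

theorem eq_zero_of_nonneg {G : Type*} [AddCommGroup G] [PartialOrder G] [IsOrderedAddMonoid G]
    {n : ℕ} {g : ℤ → ℕ → G} (hg : IsAdditiveFrieze n g) (hnonneg : ∀ i, ∀ p ≤ n + 1, 0 ≤ g i p)
    (i : ℤ) {p : ℕ} (hp : p ≤ n + 1) : g i p = 0 :=
  ((add_eq_zero_iff_of_nonneg (hnonneg i p hp) (hnonneg _ _ (Nat.sub_le _ _))).mp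
    (hg.add_glide_reflection_eq_zero i hp)).1

end IsAdditiveFrieze

/-- The values of `f` on the rows `1, …, n` of `ℤA_n`, extended by zero to all other rows; this
supplies the zero rows required by `IsAdditiveFrieze`. -/
def extendByZero {G : Type*} [Zero G] (n : ℕ) (f : ℤ × ℤ → G) (i : ℤ) (p : ℕ) : G :=
  if 1 ≤ p ∧ p ≤ n then f (i, p) else 0

theorem extendByZero_of_mem {G : Type*} [Zero G] {n : ℕ} (f : ℤ × ℤ → G) (i : ℤ) {p : ℕ}
    (h₁ : 1 ≤ p) (hn : p ≤ n) : extendByZero n f i p = f (i, p) :=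
  if_pos ⟨h₁, hn⟩

theorem extendByZero_nonneg {G : Type*} [Zero G] [Preorder G] {n : ℕ} {f : ℤ × ℤ → G}
    (hf : ∀ i p : ℤ, 1 ≤ p → p ≤ n → 0 ≤ f (i, p)) (i : ℤ) (p : ℕ) :
    0 ≤ extendByZero n f i p := by
  unfold extendByZero
  split_ifs with hp
  · exact hf i p (mod_cast hp.1) (mod_cast hp.2)
  · exact le_rfl

namespace ZAClusterAdditive

variable {n : ℕ} {f : ℤ × ℤ → ℤ}

theorem extendByZero_mesh (hf : ZAClusterAdditive n f) (i : ℤ) {p : ℕ} (hp : p < n) :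
    extendByZero n f (i + 1) (p + 1) + extendByZero n f i (p + 1) =
      max (extendByZero n f (i + 1) p) 0 + max (extendByZero n f i (p + 2)) 0 := by
  have hmesh := hf (i + 1) (p + 1) (by lia) (by lia)
  rw [add_sub_cancel_right, add_sub_cancel_right, add_assoc (p : ℤ), one_add_one_eq_two] at hmesh
  rw [extendByZero_of_mem f _ (by lia) hp, extendByZero_of_mem f _ (by lia) hp]
  push_cast
  rw [hmesh]
  unfold extendByZero
  congr 1 <;> split_ifs <;> first | rfl | lia

theorem isAdditiveFrieze_extendByZero (hf : ZAClusterAdditive n f)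
    (hnonneg : ∀ i p : ℤ, 1 ≤ p → p ≤ n → 0 ≤ f (i, p)) :
    IsAdditiveFrieze n (extendByZero n f) where
  row_zero i := if_neg (by lia)
  row_last i := if_neg (by lia)
  mesh i p hp := by
    rw [hf.extendByZero_mesh i hp, max_eq_left (extendByZero_nonneg hnonneg _ _),
      max_eq_left (extendByZero_nonneg hnonneg _ _)]

end ZAClusterAdditive

theorem stmt_3 (n : ℤ) (hn : 1 ≤ n) (f : ℤ × ℤ → ℤ)
    (hca : ZAClusterAdditive n f)
    (hnonneg : ∀ i p : ℤ, 1 ≤ p → p ≤ n → 0 ≤ f (i, p)) :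
    ∀ i p : ℤ, 1 ≤ p → p ≤ n → f (i, p) = 0 := by
  intro i p h₁ hp
  lift n to ℕ using by lia
  lift p to ℕ using by lia
  rw [← extendByZero_of_mem f i (mod_cast h₁) (mod_cast hp)]
  exact (hca.isAdditiveFrieze_extendByZero hnonneg).eq_zero_of_nonneg
    (fun j q _ => extendByZero_nonneg hnonneg j q) i (by lia)
end

section
/- Let n ≥ 1 and let f : {1,…,n} → ℤ satisfy 2·f(p) = f(p−1)⁺ + f(p+1)⁺ for all 1 ≤ p ≤ n, where the terms f(0)⁺ and f(n+1)⁺ are interpreted as 0. Then f is identically zero. (This says that the only cluster-additive function on the translation quiver ℤA_n/τ is the zero function.) -/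
/-!
A cluster-additive function on `ℤA_n/τ` is nonnegative, since twice each value is a sum of positive
parts. Taking positive parts therefore changes nothing, and the function, extended by zero off the
vertex set, is at each vertex the average of its two neighbors. By the discrete maximum principle
it cannot exceed its value `0` off the vertex set: at the leftmost positive maximum the left
neighbor is strictly smaller and the right one is not larger, which contradicts the averaging.
-/

open Set

theorem exists_leftmost_max_of_finite {α β : Type*} [LinearOrder α] [LinearOrder β] {s : Set α}
    (hs : s.Finite) (hne : s.Nonempty) (g : α → β) :
    ∃ m ∈ s, (∀ q ∈ s, g q ≤ g m) ∧ ∀ q ∈ s, q < m → g q < g m := by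
  obtain ⟨m, hm, hmax⟩ :=
    exists_max_image s (fun q ↦ toLex (g q, OrderDual.toDual q)) hs hne
  simp only [Prod.Lex.toLex_le_toLex, OrderDual.toDual_le_toDual] at hmax
  refine ⟨m, hm, fun q hq ↦ ?_, fun q hq hlt ↦ ?_⟩
  · exact (hmax q hq).elim le_of_lt fun h ↦ h.1.le
  · exact (hmax q hq).resolve_right fun h ↦ hlt.not_ge h.2

section OrderedMonoid

variable {G : Type*} [AddCommMonoid G] [LinearOrder G]

/-- Cluster-additivity of a function on the translation quiver with vertex set `s`, one arrow in
each direction between consecutive integers of `s`, and identity translation. For `s = Icc 1 n` this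
quiver is `ℤA_n/τ`. The function is defined on all of `ℤ`, and `Set.indicator` discards its values
off `s`. -/
def IsClusterAdditiveOn (s : Set ℤ) (f : ℤ → G) : Prop :=
  ∀ p ∈ s, 2 • f p =
    s.indicator (fun q ↦ max (f q) 0) (p - 1) + s.indicator (fun q ↦ max (f q) 0) (p + 1)

theorem isClusterAdditiveOn_Icc_one_iff {n : ℤ} {f : ℤ → G} :
    IsClusterAdditiveOn (Icc 1 n) f ↔ ∀ p : ℤ, 1 ≤ p → p ≤ n →
      2 • f p = (if 2 ≤ p then max (f (p - 1)) 0 else 0) +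
        (if p ≤ n - 1 then max (f (p + 1)) 0 else 0) := by
  simp only [IsClusterAdditiveOn, mem_Icc, and_imp, indicator_apply]
  refine forall₃_congr fun p h1 hn ↦ ?_
  have pred_mem : 1 ≤ p - 1 ∧ p - 1 ≤ n ↔ 2 ≤ p := by lia
  have succ_mem : 1 ≤ p + 1 ∧ p + 1 ≤ n ↔ p ≤ n - 1 := by lia
  simp only [pred_mem, succ_mem]

variable [IsOrderedCancelAddMonoid G]

theorem le_of_two_nsmul_le_add_neighbors {s : Set ℤ} (hs : s.Finite) {g : ℤ → G} {c : G}
    (hg : ∀ p ∈ s, 2 • g p ≤ g (p - 1) + g (p + 1)) (hc : ∀ p ∉ s, g p ≤ c) (p : ℤ) :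
    g p ≤ c := by
  by_contra! hp
  have mem_of_lt {q : ℤ} (hq : c < g q) : q ∈ s := by_contra fun h ↦ hq.not_ge (hc q h)
  obtain ⟨m, hm : c < g m, hmax, hleft⟩ :=
    exists_leftmost_max_of_finite (hs.subset fun _ ↦ mem_of_lt) ⟨p, hp⟩ g
  have left_lt : g (m - 1) < g m :=
    (le_or_gt (g (m - 1)) c).elim hm.trans_le' fun h ↦ hleft _ h (sub_one_lt m)
  have right_le : g (m + 1) ≤ g m :=
    (le_or_gt (g (m + 1)) c).elim hm.le.trans' (hmax _)
  have neighbors_sum_lt : g (m - 1) + g (m + 1) < 2 • g m := by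
    rw [two_nsmul]
    exact add_lt_add_of_lt_of_le left_lt right_le
  exact neighbors_sum_lt.not_ge (hg m (mem_of_lt hm))

namespace IsClusterAdditiveOn

variable {s : Set ℤ} {f : ℤ → G}

theorem nonneg (hf : IsClusterAdditiveOn s f) {p : ℤ} (hp : p ∈ s) : 0 ≤ f p := by
  have terms_nonneg (q : ℤ) : 0 ≤ s.indicator (fun q ↦ max (f q) 0) q :=
    indicator_nonneg (fun _ _ ↦ le_max_right _ _) q
  rw [← nsmul_nonneg_iff two_ne_zero, hf p hp]
  exact add_nonneg (terms_nonneg _) (terms_nonneg _)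

theorem two_nsmul_indicator (hf : IsClusterAdditiveOn s f) {p : ℤ} (hp : p ∈ s) :
    2 • s.indicator f p = s.indicator f (p - 1) + s.indicator f (p + 1) := by
  have indicator_max : s.indicator (fun q ↦ max (f q) 0) = s.indicator f :=
    indicator_congr fun q hq ↦ max_eq_left (hf.nonneg hq)
  rw [indicator_of_mem hp, hf p hp, indicator_max]

end IsClusterAdditiveOn

theorem stmt_4_general {s : Set ℤ} (hs : s.Finite) {f : ℤ → G} (hf : IsClusterAdditiveOn s f) :
    ∀ p ∈ s, f p = 0 := by
  intro p hp
  have indicator_nonpos : s.indicator f p ≤ 0 :=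
    le_of_two_nsmul_le_add_neighbors hs (fun _ hq ↦ (hf.two_nsmul_indicator hq).le)
      (fun _ hq ↦ (indicator_of_notMem hq f).le) p
  rw [indicator_of_mem hp] at indicator_nonpos
  exact indicator_nonpos.antisymm (hf.nonneg hp)

end OrderedMonoid

theorem stmt_4 (n : ℤ) (hn : 1 ≤ n) (f : ℤ → ℤ)
    (hca : ∀ p : ℤ, 1 ≤ p → p ≤ n →
      2 * f p = (if 2 ≤ p then max (f (p - 1)) 0 else 0) +
                (if p ≤ n - 1 then max (f (p + 1)) 0 else 0)) :
    ∀ p : ℤ, 1 ≤ p → p ≤ n → f p = 0 := by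
  have hf : IsClusterAdditiveOn (Icc 1 n) f :=
    isClusterAdditiveOn_Icc_one_iff.mpr (by simpa only [two_nsmul, two_mul] using hca)
  exact fun p h1 hpn ↦ stmt_4_general (finite_Icc 1 n) hf p ⟨h1, hpn⟩
end

section
/- Let (V, m, τ) be a stable translation quiver in which every vertex is the source of at least one arrow (for every y ∈ V there exists z ∈ V with m(y,z) ≠ 0). Let f₁, …, f_a : V → ℤ (a ≥ 1) be cluster-additive functions. Then the pointwise sum f₁ + ⋯ + f_a is cluster-additive if and only if the functions f₁, …, f_a are pairwise compatible. -/
/-- Two functions are compatible if their product is pointwise non-negative. -/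
def Compatible {V : Type*} (f g : V → ℤ) : Prop := ∀ x, 0 ≤ f x * g x

/-!
Adding up the equations of the `f i` at `z` gives `∑ y, m y z * ∑ i, (f i y)⁺` on the right, whereas
cluster-additivity of the sum asks for `∑ y, m y z * (∑ i, f i y)⁺`. Since `t ↦ t⁺` is subadditive,
the second expression is at most the first term by term, so the two agree exactly when
`(∑ i, f i y)⁺ = ∑ i, (f i y)⁺` at every `y` with an arrow to `z`, that is, when the values `f i y`
do not have opposite signs.
-/

section PositivePart

variable {ι M : Type*} [AddCommMonoid M] [LinearOrder M]

theorem max_sum_zero_le_sum_max_zero [IsOrderedAddMonoid M] (s : Finset ι) (g : ι → M) :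
    max (∑ i ∈ s, g i) 0 ≤ ∑ i ∈ s, max (g i) 0 :=
  max_le (Finset.sum_le_sum fun _ _ ↦ le_max_left _ _)
    (Finset.sum_nonneg fun _ _ ↦ le_max_right _ _)

theorem max_sum_zero_eq_sum_max_zero_iff [IsOrderedCancelAddMonoid M] {s : Finset ι} {g : ι → M} :
    max (∑ i ∈ s, g i) 0 = ∑ i ∈ s, max (g i) 0 ↔
      (∀ i ∈ s, 0 ≤ g i) ∨ ∀ i ∈ s, g i ≤ 0 := by
  constructor
  · intro h
    rcases le_total 0 (∑ i ∈ s, g i) with hsum | hsum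
    · rw [max_eq_left hsum, Finset.sum_eq_sum_iff_of_le fun _ _ ↦ le_max_left _ _] at h
      exact .inl fun i hi ↦ left_eq_sup.mp (h i hi)
    · rw [max_eq_right hsum, eq_comm,
        Finset.sum_eq_zero_iff_of_nonneg fun _ _ ↦ le_max_right _ _] at h
      exact .inr fun i hi ↦ sup_eq_right.mp (h i hi)
  · rintro (hg | hg)
    · rw [max_eq_left (Finset.sum_nonneg hg)]
      exact Finset.sum_congr rfl fun i hi ↦ (max_eq_left (hg i hi)).symm
    · rw [max_eq_right (Finset.sum_nonpos hg)]
      exact (Finset.sum_eq_zero fun i hi ↦ max_eq_right (hg i hi)).symm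

end PositivePart

theorem pairwise_mul_nonneg_iff {ι R : Type*} [Ring R] [LinearOrder R] [IsStrictOrderedRing R]
    {s : Set ι} {g : ι → R} :
    s.Pairwise (fun i j ↦ 0 ≤ g i * g j) ↔ (∀ i ∈ s, 0 ≤ g i) ∨ ∀ i ∈ s, g i ≤ 0 := by
  constructor
  · intro h
    by_contra! ⟨⟨i, hi, hneg⟩, j, hj, hpos⟩
    have hij : i ≠ j := by
      rintro rfl
      exact hneg.not_gt hpos
    exact (h hi hj hij).not_gt (mul_neg_of_neg_of_pos hneg hpos)
  · rintro (hg | hg) i hi j hj -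
    · exact mul_nonneg (hg i hi) (hg j hj)
    · exact mul_nonneg_of_nonpos_of_nonpos (hg i hi) (hg j hj)

theorem finsum_mul_eq_finsum_mul_iff_of_le {ι R : Type*} [Semiring R] [PartialOrder R]
    [IsStrictOrderedRing R] [IsLeftCancelMulZero R] {w g h : ι → R} (hw : w.support.Finite)
    (hw_nonneg : 0 ≤ w) (hgh : g ≤ h) :
    ∑ᶠ i, w i * g i = ∑ᶠ i, w i * h i ↔ ∀ i, w i ≠ 0 → g i = h i := by
  have finsum_eq (k : ι → R) : ∑ᶠ i, w i * k i = ∑ i ∈ hw.toFinset, w i * k i :=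
    finsum_eq_sum_of_support_subset_of_finite _ (Function.support_mul_subset_left w k) hw
  rw [finsum_eq, finsum_eq, Finset.sum_eq_sum_iff_of_le fun i _ ↦
    mul_le_mul_of_nonneg_left (hgh i) (hw_nonneg i)]
  refine forall_congr' fun i ↦ ?_
  rw [Set.Finite.mem_toFinset, Function.mem_support]
  exact forall_congr' fun hi ↦ mul_right_inj' hi

section ClusterAdditive

variable {V ι : Type*} {m : V → V → ℕ} {τ : V ≃ V} {s : Finset ι} {f : ι → V → ℤ}

theorem finite_support_natCast_multiplicity (hfin : ∀ z, {y | m y z ≠ 0}.Finite) (z : V) :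
    (Function.support fun y ↦ (m y z : ℤ)).Finite :=
  (hfin z).subset fun _ hy ↦ Nat.cast_ne_zero.mp hy

theorem ClusterAdditive.sum_add_sum (hfin : ∀ z, {y | m y z ≠ 0}.Finite)
    (hf : ∀ i ∈ s, ClusterAdditive m τ (f i)) (z : V) :
    ∑ i ∈ s, f i z + ∑ i ∈ s, f i (τ z) = ∑ᶠ y, (m y z : ℤ) * ∑ i ∈ s, max (f i y) 0 := by
  calc
    ∑ i ∈ s, f i z + ∑ i ∈ s, f i (τ z) = ∑ i ∈ s, ∑ᶠ y, (m y z : ℤ) * max (f i y) 0 := by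
      rw [← Finset.sum_add_distrib]
      exact Finset.sum_congr rfl fun i hi ↦ hf i hi z
    _ = ∑ᶠ y, ∑ i ∈ s, (m y z : ℤ) * max (f i y) 0 :=
      (finsum_sum_comm s _ fun _ _ ↦ (finite_support_natCast_multiplicity hfin z).subset
        (Function.support_mul_subset_left _ _)).symm
    _ = ∑ᶠ y, (m y z : ℤ) * ∑ i ∈ s, max (f i y) 0 := by
      simp only [Finset.mul_sum]

theorem ClusterAdditive.sum_iff_max_sum_eq (hfin : ∀ z, {y | m y z ≠ 0}.Finite)
    (hf : ∀ i ∈ s, ClusterAdditive m τ (f i)) :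
    ClusterAdditive m τ (fun x ↦ ∑ i ∈ s, f i x) ↔
      ∀ z y, m y z ≠ 0 → max (∑ i ∈ s, f i y) 0 = ∑ i ∈ s, max (f i y) 0 := by
  refine forall_congr' fun z ↦ ?_
  rw [ClusterAdditive.sum_add_sum hfin hf, eq_comm, finsum_mul_eq_finsum_mul_iff_of_le
    (finite_support_natCast_multiplicity hfin z) (fun _ ↦ Nat.cast_nonneg _)
    fun y ↦ max_sum_zero_le_sum_max_zero s (f · y)]
  simp only [Nat.cast_ne_zero]

theorem stmt_5_general (hfin : ∀ z, {y | m y z ≠ 0}.Finite)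
    (hf : ∀ i ∈ s, ClusterAdditive m τ (f i)) :
    ClusterAdditive m τ (fun x ↦ ∑ i ∈ s, f i x) ↔
      (s : Set ι).Pairwise fun i j ↦ ∀ y, (∃ z, m y z ≠ 0) → 0 ≤ f i y * f j y := by
  calc
    ClusterAdditive m τ (fun x ↦ ∑ i ∈ s, f i x)
    _ ↔ ∀ z y, m y z ≠ 0 → (s : Set ι).Pairwise fun i j ↦ 0 ≤ f i y * f j y := by
      simp only [ClusterAdditive.sum_iff_max_sum_eq hfin hf, max_sum_zero_eq_sum_max_zero_iff,
        pairwise_mul_nonneg_iff, Finset.mem_coe]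
    _ ↔ (s : Set ι).Pairwise fun i j ↦ ∀ y, (∃ z, m y z ≠ 0) → 0 ≤ f i y * f j y :=
      ⟨fun h _ hi _ hj hij y ⟨z, hyz⟩ ↦ h z y hyz hi hj hij,
        fun h z y hyz _ hi _ hj hij ↦ h hi hj hij y ⟨z, hyz⟩⟩

end ClusterAdditive

theorem stmt_5 {V : Type*} (m : V → V → ℕ) (τ : V ≃ V)
    (hfin : ∀ z, {y | m y z ≠ 0}.Finite)
    (hτ : ∀ y z, m (τ z) y = m y z)
    (hsource : ∀ y : V, ∃ z : V, m y z ≠ 0)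
    (a : ℕ) (ha : 1 ≤ a) (f : Fin a → V → ℤ)
    (hca : ∀ i, ClusterAdditive m τ (f i)) :
    ClusterAdditive m τ (fun x => ∑ i, f i x) ↔
      ∀ i j, i ≠ j → Compatible (f i) (f j) := by
  simpa [Set.Pairwise, Compatible, hsource] using
    stmt_5_general (s := Finset.univ) hfin fun i _ ↦ hca i
end

section
/- Let (V, m, τ) be a stable translation quiver in which every vertex is the source of at least one arrow (for every y ∈ V there exists z ∈ V with m(y,z) ≠ 0). Let f, g : V → ℤ be cluster-additive functions. Then the pointwise difference f − g is cluster-additive if and only if g ≤ f, i.e. g(x)⁺ ≤ f(x)⁺ and g(x)⁻ ≤ f(x)⁻ for all x ∈ V. -/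
/-!
The positive part is subadditive, so `f⁺ - g⁺ ≤ (f - g)⁺` pointwise, with equality exactly where
`g⁺ ≤ f⁺` and `g⁻ ≤ f⁻`. Subtracting the mesh relations of `f` and `g` at `z` shows that `f - g`
satisfies the mesh relation at `z` iff the weighted sums of the two sides over the arrows into `z`
agree; as the weights are nonnegative, this forces equality at every source of such an arrow.
-/

section LatticeOrderedGroup

variable {α : Type*} [AddCommGroup α] [Lattice α] [AddLeftMono α]

theorem posPart_sub_eq_sub_inf (a b : α) :
    (a - b)⁺ = (a⁺ - b⁺) - (a⁺ - b⁺) ⊓ (a⁻ - b⁻) := by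
  have hab : a - b = (a⁺ - b⁺) - (a⁻ - b⁻) := by
    rw [sub_sub_sub_comm, posPart_sub_negPart, posPart_sub_negPart]
  rw [inf_eq_sub_posPart_sub, ← hab, sub_sub_cancel]

theorem posPart_sub_posPart_inf_negPart_sub_negPart_nonpos (a b : α) :
    (a⁺ - b⁺) ⊓ (a⁻ - b⁻) ≤ 0 :=
  calc (a⁺ - b⁺) ⊓ (a⁻ - b⁻) ≤ a⁺ ⊓ a⁻ :=
        inf_le_inf (sub_le_self _ (posPart_nonneg b)) (sub_le_self _ (negPart_nonneg b))
    _ = 0 := posPart_inf_negPart_eq_zero a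

theorem posPart_sub_posPart_le_posPart_sub (a b : α) : a⁺ - b⁺ ≤ (a - b)⁺ := by
  rw [posPart_sub_eq_sub_inf]
  exact (le_sub_self_iff _).2 (posPart_sub_posPart_inf_negPart_sub_negPart_nonpos a b)

theorem posPart_sub_posPart_eq_posPart_sub_iff (a b : α) :
    a⁺ - b⁺ = (a - b)⁺ ↔ b⁺ ≤ a⁺ ∧ b⁻ ≤ a⁻ :=
  calc a⁺ - b⁺ = (a - b)⁺
    _ ↔ (a⁺ - b⁺) ⊓ (a⁻ - b⁻) = 0 := by rw [posPart_sub_eq_sub_inf, eq_comm, sub_eq_self]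
    _ ↔ 0 ≤ (a⁺ - b⁺) ⊓ (a⁻ - b⁻) :=
      (posPart_sub_posPart_inf_negPart_sub_negPart_nonpos a b).ge_iff_eq.symm
    _ ↔ b⁺ ≤ a⁺ ∧ b⁻ ≤ a⁻ := by rw [le_inf_iff, sub_nonneg, sub_nonneg]

end LatticeOrderedGroup

theorem finsum_eq_finsum_iff_of_le_s7 {ι M : Type*} [AddCommMonoid M] [PartialOrder M]
    [IsOrderedCancelAddMonoid M] {u v : ι → M} (hu : u.HasFiniteSupport)
    (hv : v.HasFiniteSupport) (huv : ∀ i, u i ≤ v i) :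
    ∑ᶠ i, u i = ∑ᶠ i, v i ↔ ∀ i, u i = v i := by
  refine ⟨fun hsum ↦ ?_, finsum_congr⟩
  have huv_support : u.support ∪ v.support ⊆ (hu.union hv).toFinset := by
    rw [Set.Finite.coe_toFinset]
  rw [finsum_eq_sum_of_support_subset u (Set.subset_union_left.trans huv_support),
    finsum_eq_sum_of_support_subset v (Set.subset_union_right.trans huv_support),
    Finset.sum_eq_sum_iff_of_le fun i _ ↦ huv i] at hsum
  intro i
  by_cases hi : i ∈ u.support ∪ v.support
  · exact hsum i (huv_support hi)
  · rw [Set.mem_union, not_or, Function.notMem_support, Function.notMem_support] at hi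
    rw [hi.1, hi.2]

theorem finsum_mul_posPart_sub_posPart_eq_iff {ι R : Type*} [Ring R] [LinearOrder R]
    [IsStrictOrderedRing R] {w : ι → R} (hw : w.HasFiniteSupport) (hw_nonneg : ∀ i, 0 ≤ w i)
    (a b : ι → R) :
    ∑ᶠ i, w i * ((a i)⁺ - (b i)⁺) = ∑ᶠ i, w i * (a i - b i)⁺ ↔
      ∀ i, w i ≠ 0 → (b i)⁺ ≤ (a i)⁺ ∧ (b i)⁻ ≤ (a i)⁻ := by
  have hle (i : ι) : w i * ((a i)⁺ - (b i)⁺) ≤ w i * (a i - b i)⁺ :=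
    mul_le_mul_of_nonneg_left (posPart_sub_posPart_le_posPart_sub _ _) (hw_nonneg i)
  have hsupport (u : ι → R) : (fun i ↦ w i * u i).HasFiniteSupport := hw.mul_left u
  refine (finsum_eq_finsum_iff_of_le_s7 (hsupport _) (hsupport _) hle).trans
    (forall_congr' fun i ↦ ?_)
  rw [mul_eq_mul_left_iff, posPart_sub_posPart_eq_posPart_sub_iff, or_comm, or_iff_not_imp_left]

namespace ClusterAdditive

variable {V : Type*} {m : V → V → ℕ} {τ : V ≃ V} {f g : V → ℤ}

theorem iff_posPart :
    ClusterAdditive m τ f ↔ ∀ z, f z + f (τ z) = ∑ᶠ y, (m y z : ℤ) * (f y)⁺ :=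
  Iff.rfl

theorem sub_iff_finsum_eq (hm : ∀ z, (fun y ↦ (m y z : ℤ)).HasFiniteSupport)
    (hf : ClusterAdditive m τ f) (hg : ClusterAdditive m τ g) :
    ClusterAdditive m τ (fun x ↦ f x - g x) ↔
      ∀ z, ∑ᶠ y, (m y z : ℤ) * ((f y)⁺ - (g y)⁺) = ∑ᶠ y, (m y z : ℤ) * (f y - g y)⁺ := by
  refine iff_posPart.trans (forall_congr' fun z ↦ ?_)
  have hmesh : f z - g z + (f (τ z) - g (τ z)) = ∑ᶠ y, (m y z : ℤ) * ((f y)⁺ - (g y)⁺) :=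
    calc f z - g z + (f (τ z) - g (τ z))
      _ = (f z + f (τ z)) - (g z + g (τ z)) := (add_sub_add_comm ..).symm
      _ = ∑ᶠ y, (m y z : ℤ) * (f y)⁺ - ∑ᶠ y, (m y z : ℤ) * (g y)⁺ := by
        rw [iff_posPart.1 hf, iff_posPart.1 hg]
      _ = ∑ᶠ y, ((m y z : ℤ) * (f y)⁺ - (m y z : ℤ) * (g y)⁺) :=
        (finsum_sub_distrib ((hm z).mul_left _) ((hm z).mul_left _)).symm
      _ = ∑ᶠ y, (m y z : ℤ) * ((f y)⁺ - (g y)⁺) := by simp only [mul_sub]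
  rw [hmesh]

end ClusterAdditive

theorem stmt_7_general {V : Type*} {m : V → V → ℕ} {τ : V ≃ V}
    (hfin : ∀ z, {y | m y z ≠ 0}.Finite) {f g : V → ℤ}
    (hf : ClusterAdditive m τ f) (hg : ClusterAdditive m τ g) :
    ClusterAdditive m τ (fun x ↦ f x - g x) ↔
      ∀ x, (∃ z, m x z ≠ 0) → (g x)⁺ ≤ (f x)⁺ ∧ (g x)⁻ ≤ (f x)⁻ := by
  have hm (z : V) : (fun y ↦ (m y z : ℤ)).HasFiniteSupport :=
    Function.HasFiniteSupport.fun_comp (hfin z) Nat.cast_zero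
  calc ClusterAdditive m τ (fun x ↦ f x - g x)
    _ ↔ ∀ z, ∑ᶠ y, (m y z : ℤ) * ((f y)⁺ - (g y)⁺) = ∑ᶠ y, (m y z : ℤ) * (f y - g y)⁺ :=
      hf.sub_iff_finsum_eq hm hg
    _ ↔ ∀ z y, (m y z : ℤ) ≠ 0 → (g y)⁺ ≤ (f y)⁺ ∧ (g y)⁻ ≤ (f y)⁻ :=
      forall_congr' fun z ↦
        finsum_mul_posPart_sub_posPart_eq_iff (hm z) (fun _ ↦ Nat.cast_nonneg _) f g
    _ ↔ ∀ x, (∃ z, m x z ≠ 0) → (g x)⁺ ≤ (f x)⁺ ∧ (g x)⁻ ≤ (f x)⁻ := by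
      rw [forall_comm]
      simp only [Nat.cast_ne_zero, forall_exists_index]

theorem stmt_7 {V : Type*} (m : V → V → ℕ) (τ : V ≃ V)
    (hfin : ∀ z, {y | m y z ≠ 0}.Finite)
    (hτ : ∀ y z, m (τ z) y = m y z)
    (hsource : ∀ y : V, ∃ z : V, m y z ≠ 0)
    (f g : V → ℤ)
    (hf : ClusterAdditive m τ f) (hg : ClusterAdditive m τ g) :
    ClusterAdditive m τ (fun x => f x - g x) ↔
      ∀ x, max (g x) 0 ≤ max (f x) 0 ∧ max (-g x) 0 ≤ max (-f x) 0 :=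
  (stmt_7_general hfin hf hg).trans <| forall_congr' fun x ↦ forall_prop_of_true (hsource x)
end

section
/- Let V₀ be a finite nonempty set and c : V₀ × V₀ → ℕ an arrow-multiplicity function such that the transitive closure of the relation {(ξ,η) : c(ξ,η) ≠ 0} is irreflexive (so Δ = (V₀, c) is a finite directed quiver). Then for every function g : V₀ → ℤ there exists a unique cluster-additive function f on ℤΔ with f(ξ, 0) = g(ξ) for all ξ ∈ V₀. -/
/-- The arrow-multiplicity function of the stable translation quiver `ℤΔ`,
for a quiver `Δ` with vertex set `V₀` and arrow multiplicities `c`: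
`m((ξ,i),(η,i)) = c(ξ,η)`, `m((ξ,i),(η,i+1)) = c(η,ξ)`, and `0` otherwise. -/
def ZQuiverMult {V₀ : Type*} (c : V₀ × V₀ → ℕ) (y z : V₀ × ℤ) : ℕ :=
  if z.2 = y.2 then c (y.1, z.1) else if z.2 = y.2 + 1 then c (z.1, y.1) else 0

/-- `f` is cluster-additive on `ℤΔ`, whose translation is `τ(ξ,i) = (ξ,i−1)`. -/
def ZQuiverClusterAdditive {V₀ : Type*} (c : V₀ × V₀ → ℕ) (f : V₀ × ℤ → ℤ) : Prop :=
  ∀ z : V₀ × ℤ, f z + f (z.1, z.2 - 1) = ∑ᶠ y : V₀ × ℤ, (ZQuiverMult c y z : ℤ) * max (f y) 0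

/-!
Cutting `ℤΔ` into the slices `V₀ × {i}`, cluster-additivity says that any two consecutive slices
`a`, `b` of `f` satisfy `b ξ + a ξ = ∑ c(η,ξ) (b η)⁺ + ∑ c(ξ,η) (a η)⁺`. Since `Δ` is directed, this
system determines `b` from `a` by recursion from the sources of `Δ`, and `a` from `b` by recursion
from its sinks. Hence passing to the next slice is a permutation of the functions on `V₀`, and `f`
is the orbit of `g` under its integral powers.
-/

theorem existsUnique_forall_eq_of_wellFounded {α β : Type*} [Nonempty β] {r : α → α → Prop}
    (hr : WellFounded r) (F : (α → β) → α → β)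
    (hF : ∀ ⦃b b' : α → β⦄ ⦃x : α⦄, (∀ y, r y x → b y = b' y) → F b x = F b' x) :
    ∃! b : α → β, ∀ x, b x = F b x := by
  classical
  refine existsUnique_of_exists_of_unique ?_ fun b b' hb hb' => ?_
  · let step (x : α) (rec : ∀ y, r y x → β) : β :=
      F (fun y => if h : r y x then rec y h else Classical.arbitrary β) x
    refine ⟨hr.fix step, fun x => ?_⟩
    rw [hr.fix_eq]
    exact hF fun y hyx => dif_pos hyx
  · funext x
    induction x using hr.induction with
    | _ x ih => rw [hb, hb', hF ih]

theorem wellFounded_of_forall_not_transGen {α : Type*} [Finite α] {r : α → α → Prop}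
    (hr : ∀ a, ¬ Relation.TransGen r a a) : WellFounded r :=
  have : Std.Irrefl (Relation.TransGen r) := ⟨hr⟩
  (Finite.wellFounded_of_trans_of_irrefl (Relation.TransGen r)).mono fun _ _ => .single

theorem exists_equiv_forall_iff_apply_eq {α β : Type*} {R : α → β → Prop}
    (hleft : ∀ a, ∃! b, R a b) (hright : ∀ b, ∃! a, R a b) :
    ∃ e : α ≃ β, ∀ a b, R a b ↔ e a = b := by
  choose s hs hs_unique using hleft
  have hR (a : α) (b : β) : R a b ↔ s a = b :=
    ⟨fun h => (hs_unique a b h).symm, fun h => h ▸ hs a⟩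
  have hs_bijective : s.Bijective :=
    (Function.bijective_iff_existsUnique s).2 fun b => by simpa only [hR] using hright b
  exact ⟨.ofBijective s hs_bijective, hR⟩

theorem existsUnique_int_orbit {X : Type*} (e : Equiv.Perm X) (a : X) :
    ∃! x : ℤ → X, (∀ i, e (x (i - 1)) = x i) ∧ x 0 = a := by
  have zpow_step (i : ℤ) : e ((e ^ (i - 1)) a) = (e ^ i) a := by
    rw [← Equiv.Perm.mul_apply, ← zpow_one_add, add_sub_cancel]
  refine ⟨fun i => (e ^ i) a, ⟨zpow_step, rfl⟩, ?_⟩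
  rintro x ⟨hx, rfl⟩
  funext i
  induction i using Int.induction_on with
  | zero => rfl
  | succ n ih => rw [← hx, ← zpow_step, add_sub_cancel_right, ih]
  | pred n ih => exact e.injective (by rw [hx, zpow_step, ih])

theorem finite_range_inter_support {α β M : Type*} [Zero M] {f : α → M} {u : β → α}
    (hfu : (Function.support (f ∘ u)).Finite) : (Set.range u ∩ Function.support f).Finite := by
  rw [Set.inter_comm, ← Set.image_preimage_eq_inter_range]
  exact hfu.image u

theorem finsum_eq_finsum_comp_add_finsum_comp {α β γ M : Type*} [AddCommMonoid M] {f : α → M}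
    {u : β → α} {v : γ → α} (hu : u.Injective) (hv : v.Injective)
    (huv : Disjoint (Set.range u) (Set.range v))
    (hf : Function.support f ⊆ Set.range u ∪ Set.range v)
    (hfu : (Function.support (f ∘ u)).Finite) (hfv : (Function.support (f ∘ v)).Finite) :
    ∑ᶠ x, f x = ∑ᶠ y, f (u y) + ∑ᶠ z, f (v z) := by
  calc ∑ᶠ x, f x = ∑ᶠ x ∈ Set.range u ∪ Set.range v, f x := by
        rw [finsum_mem_def, Set.indicator_eq_self.2 hf]
    _ = ∑ᶠ x ∈ Set.range u, f x + ∑ᶠ x ∈ Set.range v, f x :=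
        finsum_mem_union' huv (finite_range_inter_support hfu) (finite_range_inter_support hfv)
    _ = ∑ᶠ y, f (u y) + ∑ᶠ z, f (v z) := by
        rw [finsum_mem_range hu, finsum_mem_range hv]

section Slices

variable {V : Type*} {c : V × V → ℕ}

theorem zQuiverMult_same_slice (η ξ : V) (i : ℤ) : ZQuiverMult c (η, i) (ξ, i) = c (η, ξ) :=
  if_pos rfl

theorem zQuiverMult_previous_slice (η ξ : V) (i : ℤ) :
    ZQuiverMult c (η, i - 1) (ξ, i) = c (ξ, η) := by
  rw [ZQuiverMult, if_neg (by grind), if_pos (by grind)]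

theorem zQuiverMult_eq_zero {j i : ℤ} (hji : j ≠ i) (hji' : j ≠ i - 1) (η ξ : V) :
    ZQuiverMult c (η, j) (ξ, i) = 0 := by
  rw [ZQuiverMult, if_neg (by grind), if_neg (by grind)]

theorem finsum_zQuiverMult_mul (hin : ∀ ξ, {η | c (η, ξ) ≠ 0}.Finite)
    (hout : ∀ ξ, {η | c (ξ, η) ≠ 0}.Finite) (φ : V × ℤ → ℤ) (ξ : V) (i : ℤ) :
    ∑ᶠ y, (ZQuiverMult c y (ξ, i) : ℤ) * φ y =
      ∑ᶠ η, (c (η, ξ) : ℤ) * φ (η, i) + ∑ᶠ η, (c (ξ, η) : ℤ) * φ (η, i - 1) := by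
  rw [finsum_eq_finsum_comp_add_finsum_comp (Prod.mk_left_injective i)
    (Prod.mk_left_injective (i - 1))]
  · simp only [zQuiverMult_same_slice, zQuiverMult_previous_slice]
  · rw [Set.disjoint_left]
    rintro _ ⟨η, rfl⟩ ⟨η', hη'⟩
    grind
  · rintro ⟨η, j⟩ hηj
    by_contra hj
    refine hηj ?_
    simp only [Set.mem_union, Set.mem_range, Prod.mk.injEq, exists_eq_left, not_or] at hj
    simp [zQuiverMult_eq_zero (Ne.symm hj.1) (Ne.symm hj.2)]
  · refine (hin ξ).subset fun η hη hc => hη ?_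
    simp [zQuiverMult_same_slice, hc]
  · refine (hout ξ).subset fun η hη hc => hη ?_
    simp [zQuiverMult_previous_slice, hc]

/-- The cluster-additivity equations at the vertices of the slice `V × {i}` of `ℤΔ`, as a relation
between the restrictions `a` and `b` of a function to `V × {i - 1}` and to `V × {i}`. -/
def MeshRelation (c : V × V → ℕ) (a b : V → ℤ) : Prop :=
  ∀ ξ, b ξ + a ξ =
    ∑ᶠ η, (c (η, ξ) : ℤ) * max (b η) 0 + ∑ᶠ η, (c (ξ, η) : ℤ) * max (a η) 0

theorem zQuiverClusterAdditive_iff_meshRelation (hin : ∀ ξ, {η | c (η, ξ) ≠ 0}.Finite)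
    (hout : ∀ ξ, {η | c (ξ, η) ≠ 0}.Finite) (f : V × ℤ → ℤ) :
    ZQuiverClusterAdditive c f ↔
      ∀ i, MeshRelation c (fun ξ => f (ξ, i - 1)) (fun ξ => f (ξ, i)) := by
  simp only [ZQuiverClusterAdditive, MeshRelation, Prod.forall,
    finsum_zQuiverMult_mul hin hout fun y => max (f y) 0]
  exact forall_comm

theorem meshRelation_comp_swap {a b : V → ℤ} :
    MeshRelation (c ∘ Prod.swap) a b ↔ MeshRelation c b a := by
  simp only [MeshRelation, Function.comp_apply, Prod.swap_prod_mk]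
  exact forall_congr' fun ξ => by rw [add_comm (b ξ), add_comm (finsum _)]

theorem existsUnique_meshRelation_right (hc : WellFounded fun η ξ => c (η, ξ) ≠ 0) (a : V → ℤ) :
    ∃! b, MeshRelation c a b := by
  simp only [MeshRelation, ← eq_sub_iff_add_eq]
  refine existsUnique_forall_eq_of_wellFounded hc (fun b ξ =>
    ∑ᶠ η, (c (η, ξ) : ℤ) * max (b η) 0 + ∑ᶠ η, (c (ξ, η) : ℤ) * max (a η) 0 - a ξ) ?_
  intro b b' ξ hbb'
  have hterm (η : V) : (c (η, ξ) : ℤ) * max (b η) 0 = c (η, ξ) * max (b' η) 0 := by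
    by_cases hηξ : c (η, ξ) = 0
    · simp [hηξ]
    · rw [hbb' η hηξ]
  simp only [hterm]

theorem existsUnique_meshRelation_left (hc : WellFounded fun η ξ => c (ξ, η) ≠ 0) (b : V → ℤ) :
    ∃! a, MeshRelation c a b := by
  simpa only [meshRelation_comp_swap] using
    existsUnique_meshRelation_right (c := c ∘ Prod.swap) hc b

end Slices

theorem stmt_8_general {V₀ : Type*} (c : V₀ × V₀ → ℕ)
    (hin : ∀ ξ, {η | c (η, ξ) ≠ 0}.Finite) (hout : ∀ ξ, {η | c (ξ, η) ≠ 0}.Finite)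
    (hsource : WellFounded fun a b => c (a, b) ≠ 0)
    (hsink : WellFounded fun a b => c (b, a) ≠ 0) (g : V₀ → ℤ) :
    ∃! f : V₀ × ℤ → ℤ, ZQuiverClusterAdditive c f ∧ ∀ ξ : V₀, f (ξ, 0) = g ξ := by
  obtain ⟨next, hnext⟩ := exists_equiv_forall_iff_apply_eq
    (existsUnique_meshRelation_right hsource) (existsUnique_meshRelation_left hsink)
  let slices : (V₀ × ℤ → ℤ) ≃ (ℤ → V₀ → ℤ) := (Equiv.curry V₀ ℤ ℤ).trans (Equiv.piComm _)
  refine (slices.existsUnique_congr fun f => ?_).2 (existsUnique_int_orbit next g)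
  rw [zQuiverClusterAdditive_iff_meshRelation hin hout, ← funext_iff]
  simp only [hnext]
  rfl

theorem stmt_8 {V₀ : Type*} [Fintype V₀] [Nonempty V₀] (c : V₀ × V₀ → ℕ)
    (hdirected : ∀ ξ : V₀, ¬ Relation.TransGen (fun a b => c (a, b) ≠ 0) ξ ξ)
    (g : V₀ → ℤ) :
    ∃! f : V₀ × ℤ → ℤ, ZQuiverClusterAdditive c f ∧ ∀ ξ : V₀, f (ξ, 0) = g ξ := by
  exact stmt_8_general c (fun _ => Set.toFinite _) (fun _ => Set.toFinite _)
    (wellFounded_of_forall_not_transGen hdirected)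
    (wellFounded_of_forall_not_transGen fun ξ h => hdirected ξ (Relation.transGen_swap.1 h)) g
end

section
/- Let n ≥ 1 and let x be a vertex of ℤA_n with cluster-hammock function h_x. Then h_x(σ(y)) = h_x(y) for every vertex y; h_x(σ^k(x)) = −1 for every k ∈ ℤ; and h_x(y) ≥ 0 for every vertex y which is not of the form σ^k(x) with k ∈ ℤ. -/
/-- The slice of `ℤA_n` through the vertex `x = (i,p)`:
`S_x = {(i,q) : p ≤ q ≤ n} ∪ {(i+p−q, q) : 1 ≤ q ≤ p−1}`. -/
def ZAInSlice (n : ℤ) (x y : ℤ × ℤ) : Prop :=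
  (y.1 = x.1 ∧ x.2 ≤ y.2 ∧ y.2 ≤ n) ∨
  (y.1 = x.1 + x.2 - y.2 ∧ 1 ≤ y.2 ∧ y.2 ≤ x.2 - 1)

/-- `h` is a cluster-hammock function at the vertex `x` of `ℤA_n`:
it is cluster-additive, takes the value `-1` at `x`, and vanishes on the
remaining vertices of the slice through `x`. -/
def ZAIsHammock (n : ℤ) (x : ℤ × ℤ) (h : ℤ × ℤ → ℤ) : Prop :=
  ZAClusterAdditive n h ∧ h x = -1 ∧ ∀ y, ZAInSlice n x y → y ≠ x → h y = 0

/-- The translation-quiver automorphism `σ(i,p) = (i+p+1, n+1−p)` of `ℤA_n`,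
realizing the functor `F = τ⁻¹[1]`. -/
def ZASigma (n : ℤ) : Equiv.Perm (ℤ × ℤ) where
  toFun v := (v.1 + v.2 + 1, n + 1 - v.2)
  invFun v := (v.1 + v.2 - n - 2, n + 1 - v.2)
  left_inv v := by obtain ⟨i, p⟩ := v; simp only [Prod.mk.injEq]; constructor <;> ring
  right_inv v := by obtain ⟨i, p⟩ := v; simp only [Prod.mk.injEq]; constructor <;> ring

/-!
Send the vertex `(i, p)` of `ℤA_n` to the chord from `i` to `i + p + 1` of the regular
`(n + 3)`-gon, whose vertices are the residues modulo `n + 3`. Then `σ` reverses the orientation of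
the chord, and the `σ`-orbits correspond to the unoriented diagonals. The crossing number with a
fixed diagonal, set to `-1` on that diagonal itself, is bilinear in the indicators of the two open
arcs cut off by the diagonal and of its two endpoints. Going one step around the polygon changes the
indicator of an open arc only at the ends of the arc, and this yields the mesh relations. Since a
cluster-additive function is determined by its values on a slice, the cluster-hammock function is
this crossing number, which is visibly `σ`-invariant and negative only on the given diagonal.
-/

open Set Equiv.Perm

section Coincidence

variable {α : Type*} {u v : α} {s t : α × α}

lemma indicator_one_nonneg (A : Set α) (u : α) : 0 ≤ A.indicator (1 : α → ℤ) u :=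
  indicator_nonneg (fun _ _ ↦ zero_le_one) u

lemma indicator_singleton_mul_indicator_singleton_of_ne (a : α) (h : u ≠ v) :
    ({a} : Set α).indicator (1 : α → ℤ) u * ({a} : Set α).indicator 1 v = 0 := by
  classical
  simp only [indicator_apply, mem_singleton_iff, Pi.one_apply]
  split_ifs <;> simp_all

/-- The indicator that the chords `s` and `t` agree up to orientation, for chords with two distinct
endpoints. -/
noncomputable def chordCoincidence (s t : α × α) : ℤ :=
  ({s.1} : Set α).indicator 1 t.1 * ({s.2} : Set α).indicator 1 t.2 +
    ({s.2} : Set α).indicator 1 t.1 * ({s.1} : Set α).indicator 1 t.2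

lemma chordCoincidence_swap_right (s t : α × α) :
    chordCoincidence s t.swap = chordCoincidence s t := by
  simp only [chordCoincidence, Prod.fst_swap, Prod.snd_swap]
  ring

lemma chordCoincidence_nonneg (s t : α × α) : 0 ≤ chordCoincidence s t :=
  add_nonneg (mul_nonneg (indicator_one_nonneg _ _) (indicator_one_nonneg _ _))
    (mul_nonneg (indicator_one_nonneg _ _) (indicator_one_nonneg _ _))

lemma chordCoincidence_eq_zero (h : t ≠ s) (h_swap : t ≠ s.swap) : chordCoincidence s t = 0 := by
  classical
  simp only [ne_eq, Prod.ext_iff, Prod.fst_swap, Prod.snd_swap] at h h_swap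
  simp only [chordCoincidence, indicator_apply, mem_singleton_iff, Pi.one_apply]
  split_ifs <;> simp_all

end Coincidence

section CircularOrder

variable {α : Type*} [CircularOrder α] {a b u v u' v' : α} {s t : α × α}

lemma sbtw_or_sbtw_of_ne (hab : a ≠ b) (hbu : b ≠ u) (hua : u ≠ a) : sbtw a b u ∨ sbtw u b a := by
  by_contra! h
  rcases (btw_iff_not_sbtw.2 h.2).antisymm (btw_iff_not_sbtw.2 h.1) with h | h | h
  exacts [hab h, hbu h, hua h]

/-- `v` is the immediate successor of `u` in the circular order, the circular analogue of `u ⋖ v`.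
Requiring `u ≠ v` rules out the one-point circle, where `u` would succeed itself. -/
def CircularCovBy (u v : α) : Prop :=
  u ≠ v ∧ ∀ z, ¬ sbtw u z v

lemma CircularCovBy.sbtw_of_ne (h : CircularCovBy u u') (hu : u ≠ b) (hu' : u' ≠ b) :
    sbtw u u' b :=
  (sbtw_or_sbtw_of_ne h.1 hu' hu.symm).resolve_right fun hb ↦ h.2 b hb.cyclic_right

lemma CircularCovBy.sbtw_or_eq_right_iff (h : CircularCovBy u u') (hab : a ≠ b) :
    (sbtw a u' b ∨ u' = b) ↔ (sbtw a u b ∨ u = a) := by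
  constructor <;> intro hmem
  · have hu'a : u' ≠ a := by
      rintro rfl
      exact hmem.elim sbtw_irrefl_left hab
    rw [or_iff_not_imp_right]
    intro hua
    have hauu' : sbtw a u u' := (h.sbtw_of_ne hua hu'a).cyclic_right
    rcases hmem with hau'b | rfl
    exacts [hauu'.trans_right hau'b, hauu']
  · have hub : u ≠ b := by
      rintro rfl
      exact hmem.elim sbtw_irrefl_right hab.symm
    rw [or_iff_not_imp_right]
    intro hu'b
    have huu'b : sbtw u u' b := h.sbtw_of_ne hub hu'b
    rcases hmem with haub | rfl
    exacts [haub.trans_left huu'b, huu'b]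

lemma CircularCovBy.indicator_cIoo_add (h : CircularCovBy u u') (hab : a ≠ b) :
    (cIoo a b).indicator 1 u' + ({b} : Set α).indicator 1 u' =
      (cIoo a b).indicator 1 u + ({a} : Set α).indicator (1 : α → ℤ) u := by
  classical
  have hiff := h.sbtw_or_eq_right_iff hab
  have hb : ¬ sbtw a b b := sbtw_irrefl_right
  have ha : ¬ sbtw a a b := sbtw_irrefl_left
  simp only [indicator_apply, mem_cIoo, mem_singleton_iff, Pi.one_apply]
  split_ifs <;> simp_all

/-- The indicator that the chords `s` and `t` of a circle cross transversally, that is, that the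
endpoints of `t` lie in different open arcs cut off by `s`. -/
noncomputable def transverseCrossing (s t : α × α) : ℤ :=
  (cIoo s.1 s.2).indicator 1 t.1 * (cIoo s.2 s.1).indicator 1 t.2 +
    (cIoo s.2 s.1).indicator 1 t.1 * (cIoo s.1 s.2).indicator 1 t.2

/-- The crossing number of two chords of a circle, with the convention that it is `-1` when the
chords agree up to orientation. -/
noncomputable def crossingNumber (s t : α × α) : ℤ :=
  transverseCrossing s t - chordCoincidence s t

lemma transverseCrossing_swap_right (s t : α × α) :
    transverseCrossing s t.swap = transverseCrossing s t := by
  simp only [transverseCrossing, Prod.fst_swap, Prod.snd_swap]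
  ring

lemma crossingNumber_swap_right (s t : α × α) : crossingNumber s t.swap = crossingNumber s t := by
  rw [crossingNumber, transverseCrossing_swap_right, chordCoincidence_swap_right, crossingNumber]

lemma transverseCrossing_nonneg (s t : α × α) : 0 ≤ transverseCrossing s t :=
  add_nonneg (mul_nonneg (indicator_one_nonneg _ _) (indicator_one_nonneg _ _))
    (mul_nonneg (indicator_one_nonneg _ _) (indicator_one_nonneg _ _))

lemma transverseCrossing_eq_zero_of_fst_eq (h : t.1 = s.1) : transverseCrossing s t = 0 := by
  simp [transverseCrossing, h, sbtw_irrefl_left, sbtw_irrefl_right]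

lemma transverseCrossing_eq_zero_of_snd_eq (h : t.2 = s.2) : transverseCrossing s t = 0 := by
  simp [transverseCrossing, h, sbtw_irrefl_left, sbtw_irrefl_right]

lemma crossingNumber_self (h : s.1 ≠ s.2) : crossingNumber s s = -1 := by
  simp [crossingNumber, transverseCrossing_eq_zero_of_fst_eq, chordCoincidence, h, h.symm]

lemma crossingNumber_eq_transverseCrossing (h : t ≠ s) (h_swap : t ≠ s.swap) :
    crossingNumber s t = transverseCrossing s t := by
  rw [crossingNumber, chordCoincidence_eq_zero h h_swap, sub_zero]

lemma crossingNumber_eq_zero_of_fst_eq (hs : s.1 ≠ s.2) (hfst : t.1 = s.1) (hsnd : t.2 ≠ s.2) :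
    crossingNumber s t = 0 := by
  rw [crossingNumber_eq_transverseCrossing (fun h ↦ hsnd (congrArg Prod.snd h))
    (fun h ↦ hs (hfst.symm.trans (congrArg Prod.fst h))), transverseCrossing_eq_zero_of_fst_eq hfst]

lemma crossingNumber_eq_zero_of_snd_eq (hs : s.1 ≠ s.2) (hsnd : t.2 = s.2) (hfst : t.1 ≠ s.1) :
    crossingNumber s t = 0 := by
  rw [crossingNumber_eq_transverseCrossing (fun h ↦ hfst (congrArg Prod.fst h))
    (fun h ↦ hs ((congrArg Prod.snd h).symm.trans hsnd)), transverseCrossing_eq_zero_of_snd_eq hsnd]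

lemma max_crossingNumber_zero (s t : α × α) :
    max (crossingNumber s t) 0 = transverseCrossing s t := by
  by_cases h : t = s ∨ t = s.swap
  · have htrans : transverseCrossing s t = 0 := by
      rcases h with rfl | rfl
      · exact transverseCrossing_eq_zero_of_fst_eq rfl
      · rw [transverseCrossing_swap_right, transverseCrossing_eq_zero_of_fst_eq rfl]
    rw [crossingNumber, htrans, zero_sub,
      max_eq_right (neg_nonpos.2 (chordCoincidence_nonneg s t))]
  · rw [not_or] at h
    rw [crossingNumber_eq_transverseCrossing h.1 h.2, max_eq_left (transverseCrossing_nonneg s t)]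

lemma CircularCovBy.transverseCrossing_eq_zero (h : CircularCovBy u u') (s : α × α) :
    transverseCrossing s (u, u') = 0 := by
  have key (a b : α) :
      (cIoo a b).indicator (1 : α → ℤ) u * (cIoo b a).indicator (1 : α → ℤ) u' = 0 := by
    by_cases hu : sbtw a u b
    · by_cases hu' : sbtw b u' a
      · have hub : u ≠ b := by
          rintro rfl
          exact sbtw_irrefl_right hu
        have hu'b : u' ≠ b := by
          rintro rfl
          exact sbtw_irrefl_left hu'
        exact absurd hu' (hu.trans_left (h.sbtw_of_ne hub hu'b)).not_sbtw
      · simp [hu']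
    · simp [hu]
  rw [transverseCrossing, key, key, add_zero]

theorem crossingNumber_add_crossingNumber_of_circularCovBy (hs : s.1 ≠ s.2)
    (hu : CircularCovBy u u') (hv : CircularCovBy v v') (huv' : u ≠ v') (hu'v : u' ≠ v) :
    crossingNumber s (u', v') + crossingNumber s (u, v) =
      transverseCrossing s (u', v) + transverseCrossing s (u, v') := by
  simp only [crossingNumber, transverseCrossing, chordCoincidence]
  linear_combination
    ((cIoo s.2 s.1).indicator 1 v' - (cIoo s.2 s.1).indicator 1 v) * hu.indicator_cIoo_add hs +
    (({s.1} : Set α).indicator 1 u - ({s.2} : Set α).indicator 1 u') *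
      hv.indicator_cIoo_add hs.symm +
    ((cIoo s.1 s.2).indicator 1 v' - (cIoo s.1 s.2).indicator 1 v) *
      hu.indicator_cIoo_add hs.symm +
    (({s.2} : Set α).indicator 1 u - ({s.1} : Set α).indicator 1 u') * hv.indicator_cIoo_add hs -
    indicator_singleton_mul_indicator_singleton_of_ne s.1 huv' -
    indicator_singleton_mul_indicator_singleton_of_ne s.2 huv' -
    indicator_singleton_mul_indicator_singleton_of_ne s.1 hu'v -
    indicator_singleton_mul_indicator_singleton_of_ne s.2 hu'v

end CircularOrder

lemma int_not_sbtw_add_one (u z : ℤ) : ¬ sbtw u z (u + 1) := by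
  rw [Int.sbtw_iff]
  lia

lemma fin_not_sbtw_add_one {N : ℕ} (u z : Fin (N + 1)) : ¬ sbtw u z (u + 1) := by
  simp only [Fin.sbtw_iff, Fin.lt_def, Fin.val_add_one, Fin.ext_iff, Fin.val_last]
  split_ifs <;> lia

lemma circularCovBy_add_one {N : ℕ} (hN : N ≠ 1) (u : ZMod N) : CircularCovBy u (u + 1) := by
  have := ZMod.nontrivial_iff.2 hN
  refine ⟨(add_ne_left.2 one_ne_zero).symm, ?_⟩
  cases N with
  | zero => exact int_not_sbtw_add_one u
  | succ N => exact fin_not_sbtw_add_one u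

section ClusterAdditive

variable {n : ℤ} {f g : ℤ × ℤ → ℤ}

lemma ZAClusterAdditive.eq_iff_eq_translate (hf : ZAClusterAdditive n f)
    (hg : ZAClusterAdditive n g) {i p : ℤ} (hp : 1 ≤ p) (hpn : p ≤ n)
    (hdown : 2 ≤ p → f (i, p - 1) = g (i, p - 1))
    (hup : p ≤ n - 1 → f (i - 1, p + 1) = g (i - 1, p + 1)) :
    f (i, p) = g (i, p) ↔ f (i - 1, p) = g (i - 1, p) := by
  have hmesh : f (i, p) + f (i - 1, p) = g (i, p) + g (i - 1, p) := by
    rw [hf i p hp hpn, hg i p hp hpn]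
    congr 1
    · exact if_ctx_congr Iff.rfl (fun h ↦ by rw [hdown h]) fun _ ↦ rfl
    · exact if_ctx_congr Iff.rfl (fun h ↦ by rw [hup h]) fun _ ↦ rfl
  constructor <;> intro h <;> linarith

lemma ZAClusterAdditive.eq_column_of_eq_column_sub_one (hf : ZAClusterAdditive n f)
    (hg : ZAClusterAdditive n g) {i : ℤ}
    (h : ∀ q, 1 ≤ q → q ≤ n → f (i - 1, q) = g (i - 1, q)) :
    ∀ q, 1 ≤ q → q ≤ n → f (i, q) = g (i, q) := by
  intro q hq
  induction q, hq using Int.leInduction with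
  | base =>
    intro hn
    exact (hf.eq_iff_eq_translate hg le_rfl hn (by lia) fun _ ↦ h _ (by lia) (by lia)).2
      (h 1 le_rfl hn)
  | succ q hq ih =>
    intro hqn
    refine (hf.eq_iff_eq_translate hg (by lia) hqn (fun _ ↦ ?_) fun _ ↦ h _ (by lia) (by lia)).2
      (h (q + 1) (by lia) hqn)
    rw [add_sub_cancel_right]
    exact ih (by lia)

lemma ZAClusterAdditive.eq_column_sub_one_of_eq_column (hf : ZAClusterAdditive n f)
    (hg : ZAClusterAdditive n g) {i k : ℤ} (hk : k ≤ n)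
    (h : ∀ q, 1 ≤ q → q ≤ k → f (i, q) = g (i, q))
    (htop : k ≤ n - 1 → f (i - 1, k + 1) = g (i - 1, k + 1)) :
    ∀ q, 1 ≤ q → q ≤ k → f (i - 1, q) = g (i - 1, q) := by
  intro q hq hqk
  induction q, hqk using Int.leInductionDown with
  | base =>
    exact (hf.eq_iff_eq_translate hg hq hk (fun _ ↦ h _ (by lia) (by lia)) htop).1
      (h k hq le_rfl)
  | pred q hqk ih =>
    refine (hf.eq_iff_eq_translate hg hq (by lia) (fun _ ↦ h _ (by lia) (by lia)) fun _ ↦ ?_).1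
      (h (q - 1) hq (by lia))
    rw [sub_add_cancel]
    exact ih (by lia)

lemma ZAClusterAdditive.eq_below_slice {a b : ℤ} (hf : ZAClusterAdditive n f)
    (hg : ZAClusterAdditive n g) (hbn : b ≤ n)
    (hs : ∀ y, ZAInSlice n (a, b) y → f y = g y) {i : ℤ} (hai : a ≤ i) (hib : i ≤ a + b - 1) :
    ∀ q, 1 ≤ q → q ≤ a + b - i → f (i, q) = g (i, q) := by
  have hslice (j : ℤ) (haj : a ≤ j) (hjb : j ≤ a + b - 1) :
      f (j, a + b - j) = g (j, a + b - j) := by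
    apply hs
    simp only [ZAInSlice]
    lia
  induction i, hib using Int.leInductionDown with
  | base =>
    intro q hq hqb
    obtain rfl : q = a + b - (a + b - 1) := by lia
    exact hslice _ hai le_rfl
  | pred i hib ih =>
    intro q hq hqb
    have hdiag := hslice (i - 1) hai (by lia)
    rcases (show q ≤ a + b - i ∨ q = a + b - (i - 1) by lia) with hqi | rfl
    · refine hf.eq_column_sub_one_of_eq_column hg (by lia) (ih (by lia)) (fun _ ↦ ?_) q hq hqi
      rwa [show a + b - i + 1 = a + b - (i - 1) by ring]
    · exact hdiag

theorem ZAClusterAdditive.eq_of_eq_on_slice {x : ℤ × ℤ} (hf : ZAClusterAdditive n f)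
    (hg : ZAClusterAdditive n g) (hxn : x.2 ≤ n) (hs : ∀ y, ZAInSlice n x y → f y = g y)
    (i : ℤ) : ∀ q, 1 ≤ q → q ≤ n → f (i, q) = g (i, q) := by
  obtain ⟨a, b⟩ := x
  induction i using Int.inductionOn' (b := a) with
  | zero =>
    intro q hq hqn
    rcases le_total b q with hbq | hqb
    · exact hs _ (.inl ⟨rfl, hbq, hqn⟩)
    · exact hf.eq_below_slice hg hxn hs le_rfl (by lia) q hq (by lia)
  | succ i _ ih =>
    apply hf.eq_column_of_eq_column_sub_one hg
    rwa [add_sub_cancel_right]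
  | pred i _ ih => exact hf.eq_column_sub_one_of_eq_column hg le_rfl ih (by lia)

end ClusterAdditive

section Sigma

lemma eq_of_sameCycle {α β : Type*} {σ : Equiv.Perm α} {F : α → β} (hF : ∀ y, F (σ y) = F y)
    {x y : α} (h : σ.SameCycle x y) : F x = F y := by
  obtain ⟨k, rfl⟩ := h
  refine zpow_induction_left (P := fun τ : Equiv.Perm α ↦ F x = F (τ x)) rfl ?_ ?_ k
  · intro τ hτ
    rw [mul_apply, hF, hτ]
  · intro τ hτ
    rw [mul_apply, hτ, ← hF (σ⁻¹ (τ x))]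
    exact congrArg F (σ.apply_symm_apply _).symm

lemma sameCycle_sigma_add_mul (n : ℤ) (i p k : ℤ) :
    (ZASigma n).SameCycle (i, p) (i + k * (n + 3), p) := by
  have hσσ (j : ℤ) : ZASigma n (ZASigma n (j, p)) = (j + (n + 3), p) := by
    simp only [ZASigma, Equiv.coe_fn_mk, Prod.mk.injEq]
    constructor <;> ring
  have hstep (j : ℤ) : (ZASigma n).SameCycle (i, p) (j, p) ↔
      (ZASigma n).SameCycle (i, p) (j + (n + 3), p) := by
    rw [← hσσ, sameCycle_apply_right, sameCycle_apply_right]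
  induction k with
  | zero => simpa using SameCycle.refl _ _
  | succ k ih =>
    rwa [add_mul, one_mul, ← add_assoc, ← hstep]
  | pred k ih =>
    rwa [hstep, sub_mul, one_mul, add_assoc, sub_add_cancel]

lemma mem_strip_iff_of_sameCycle {n : ℤ} {x y : ℤ × ℤ} (h : (ZASigma n).SameCycle x y) :
    (1 ≤ x.2 ∧ x.2 ≤ n) ↔ (1 ≤ y.2 ∧ y.2 ≤ n) := by
  refine iff_of_eq (eq_of_sameCycle (F := fun y : ℤ × ℤ ↦ 1 ≤ y.2 ∧ y.2 ≤ n) (fun y ↦ ?_) h)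
  simp only [ZASigma, Equiv.coe_fn_mk, eq_iff_iff]
  lia

end Sigma

section Polygon

variable {n : ℕ} {x y : ℤ × ℤ}

/-- The oriented chord of the `(n + 3)`-gon attached to a vertex of `ℤA_n`. -/
def zaChord (n : ℕ) (y : ℤ × ℤ) : ZMod (n + 3) × ZMod (n + 3) :=
  (y.1, (y.1 + y.2 + 1 : ℤ))

lemma zaChord_sigma (n : ℕ) (y : ℤ × ℤ) : zaChord n (ZASigma n y) = (zaChord n y).swap := by
  have hN : ((n : ZMod (n + 3)) + 3) = 0 := mod_cast ZMod.natCast_self (n + 3)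
  simp only [zaChord, ZASigma, Equiv.coe_fn_mk, Prod.swap_prod_mk, Prod.mk.injEq, true_and]
  push_cast
  linear_combination hN

lemma eq_of_intCast_zmod_eq {N : ℕ} {i j : ℤ} (hij : |j - i| < N) (h : (i : ZMod N) = j) : i = j :=
  (sub_eq_zero.1 (Int.eq_zero_of_abs_lt_dvd
    ((ZMod.intCast_eq_intCast_iff_dvd_sub i j N).1 h) hij)).symm

lemma zaChord_fst_ne_snd (hy : 1 ≤ y.2 ∧ y.2 ≤ n) : (zaChord n y).1 ≠ (zaChord n y).2 := by
  intro h
  have := eq_of_intCast_zmod_eq (by rw [abs_lt]; lia) h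
  lia

lemma sameCycle_of_zaChord_eq (hx : 1 ≤ x.2 ∧ x.2 ≤ n) (hy : 1 ≤ y.2 ∧ y.2 ≤ n)
    (h : zaChord n x = zaChord n y) : (ZASigma n).SameCycle x y := by
  obtain ⟨i, p⟩ := x
  obtain ⟨j, q⟩ := y
  obtain ⟨hfst, hsnd⟩ := Prod.mk.injEq _ _ _ _ ▸ h
  obtain rfl : p = q := by
    refine eq_of_intCast_zmod_eq (N := n + 3) (by rw [abs_lt]; lia) ?_
    push_cast at hfst hsnd
    linear_combination hsnd - hfst
  obtain ⟨k, hk⟩ := (ZMod.intCast_eq_intCast_iff_dvd_sub i j (n + 3)).1 hfst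
  obtain rfl : j = i + k * (n + 3) := by
    push_cast at hk
    linear_combination hk
  exact sameCycle_sigma_add_mul n i p k

lemma sameCycle_of_zaChord_eq_swap (hx : 1 ≤ x.2 ∧ x.2 ≤ n) (hy : 1 ≤ y.2 ∧ y.2 ≤ n)
    (h : zaChord n y = (zaChord n x).swap) : (ZASigma n).SameCycle x y := by
  have hσx : (ZASigma n).SameCycle x (ZASigma n x) := sameCycle_apply_right.2 .rfl
  refine hσx.trans (sameCycle_of_zaChord_eq ((mem_strip_iff_of_sameCycle hσx).1 hx) hy ?_)
  rw [zaChord_sigma, h]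

/-- The crossing number of the chords attached to two vertices of `ℤA_n`. -/
noncomputable def zaCrossing (n : ℕ) (x y : ℤ × ℤ) : ℤ :=
  crossingNumber (zaChord n x) (zaChord n y)

lemma zaCrossing_self (hx : 1 ≤ x.2 ∧ x.2 ≤ n) : zaCrossing n x x = -1 :=
  crossingNumber_self (zaChord_fst_ne_snd hx)

lemma zaCrossing_sigma (n : ℕ) (x y : ℤ × ℤ) :
    zaCrossing n x (ZASigma n y) = zaCrossing n x y := by
  rw [zaCrossing, zaChord_sigma, crossingNumber_swap_right, zaCrossing]

lemma zaCrossing_nonneg (hx : 1 ≤ x.2 ∧ x.2 ≤ n) (hy : 1 ≤ y.2 ∧ y.2 ≤ n)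
    (hxy : ¬ (ZASigma n).SameCycle x y) : 0 ≤ zaCrossing n x y := by
  rw [zaCrossing, crossingNumber_eq_transverseCrossing
    (fun h ↦ hxy (sameCycle_of_zaChord_eq hx hy h.symm))
    (fun h ↦ hxy (sameCycle_of_zaChord_eq_swap hx hy h))]
  exact transverseCrossing_nonneg _ _

lemma zaCrossing_eq_zero_of_mem_slice (hx : 1 ≤ x.2 ∧ x.2 ≤ n) (hy : ZAInSlice n x y)
    (hyx : y ≠ x) : zaCrossing n x y = 0 := by
  obtain ⟨a, b⟩ := x
  obtain ⟨i, q⟩ := y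
  have hab := zaChord_fst_ne_snd hx
  rcases hy with ⟨hi, hbq, hqn⟩ | ⟨hi, hq, hqb⟩
  · obtain rfl : i = a := hi
    refine crossingNumber_eq_zero_of_fst_eq hab rfl fun h ↦ hyx ?_
    have := eq_of_intCast_zmod_eq (by rw [abs_lt]; lia) h
    rw [show q = b by lia]
  · have hsnd : i + q + 1 = a + b + 1 := by lia
    refine crossingNumber_eq_zero_of_snd_eq hab (congrArg Int.cast hsnd) fun h ↦ ?_
    have := eq_of_intCast_zmod_eq (by rw [abs_lt]; lia) h
    lia

lemma transverseCrossing_zaChord_of_boundary (s : ZMod (n + 3) × ZMod (n + 3))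
    (hy : y.2 = 0 ∨ y.2 = n + 1) : transverseCrossing s (zaChord n y) = 0 := by
  obtain ⟨i, p⟩ := y
  rcases hy with rfl | rfl
  · have h := circularCovBy_add_one (N := n + 3) (by lia) (i : ZMod (n + 3))
    simpa [zaChord] using h.transverseCrossing_eq_zero s
  · have h := circularCovBy_add_one (N := n + 3) (by lia) ((i + (n + 1) + 1 : ℤ) : ZMod (n + 3))
    have hN : ((n : ZMod (n + 3)) + 3) = 0 := mod_cast ZMod.natCast_self (n + 3)
    have hswap : (zaChord n (i, n + 1)).swap =
        (((i + (n + 1) + 1 : ℤ) : ZMod (n + 3)), ((i + (n + 1) + 1 : ℤ) : ZMod (n + 3)) + 1) := by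
      refine Prod.ext rfl ?_
      change (i : ZMod (n + 3)) = _
      push_cast
      linear_combination -hN
    rw [← transverseCrossing_swap_right, hswap, h.transverseCrossing_eq_zero]

lemma ite_max_zaCrossing {c : Prop} [Decidable c] (hc : ¬ c → y.2 = 0 ∨ y.2 = n + 1) :
    (if c then max (zaCrossing n x y) 0 else 0) =
      transverseCrossing (zaChord n x) (zaChord n y) := by
  split_ifs with h
  · rw [zaCrossing, max_crossingNumber_zero]
  · rw [transverseCrossing_zaChord_of_boundary _ (hc h)]

theorem zaClusterAdditive_zaCrossing (hx : 1 ≤ x.2 ∧ x.2 ≤ n) :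
    ZAClusterAdditive n (zaCrossing n x) := by
  intro i p hp hpn
  have hu : CircularCovBy ((i - 1 : ℤ) : ZMod (n + 3)) (i : ℤ) := by
    simpa using circularCovBy_add_one (N := n + 3) (by lia) ((i - 1 : ℤ) : ZMod (n + 3))
  have hv : CircularCovBy ((i + p : ℤ) : ZMod (n + 3)) (i + p + 1 : ℤ) := by
    simpa using circularCovBy_add_one (N := n + 3) (by lia) ((i + p : ℤ) : ZMod (n + 3))
  have huv' : ((i - 1 : ℤ) : ZMod (n + 3)) ≠ (i + p + 1 : ℤ) := fun h ↦ by
    have := eq_of_intCast_zmod_eq (by rw [abs_lt]; lia) h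
    lia
  have hu'v : (i : ZMod (n + 3)) ≠ (i + p : ℤ) := fun h ↦ by
    have := eq_of_intCast_zmod_eq (by rw [abs_lt]; lia) h
    lia
  have hmesh := crossingNumber_add_crossingNumber_of_circularCovBy (zaChord_fst_ne_snd hx)
    hu hv huv' hu'v
  rw [ite_max_zaCrossing (by lia), ite_max_zaCrossing (by lia)]
  convert hmesh using 3 <;> simp only [zaChord, zaCrossing] <;> ring_nf

theorem zaIsHammock_zaCrossing (hx : 1 ≤ x.2 ∧ x.2 ≤ n) : ZAIsHammock n x (zaCrossing n x) :=
  ⟨zaClusterAdditive_zaCrossing hx, zaCrossing_self hx,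
    fun _ ↦ zaCrossing_eq_zero_of_mem_slice hx⟩

end Polygon

theorem ZAIsHammock.unique {n : ℤ} {x : ℤ × ℤ} {g h : ℤ × ℤ → ℤ} (hg : ZAIsHammock n x g)
    (hh : ZAIsHammock n x h) (hxn : x.2 ≤ n) {y : ℤ × ℤ} (hy : 1 ≤ y.2 ∧ y.2 ≤ n) :
    g y = h y := by
  refine hg.1.eq_of_eq_on_slice hh.1 hxn (fun z hz ↦ ?_) y.1 y.2 hy.1 hy.2
  by_cases hzx : z = x
  · rw [hzx, hg.2.1, hh.2.1]
  · rw [hg.2.2 z hz hzx, hh.2.2 z hz hzx]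

theorem stmt_10 (n : ℤ) (hn : 1 ≤ n) (x : ℤ × ℤ) (hx1 : 1 ≤ x.2) (hxn : x.2 ≤ n)
    (h : ℤ × ℤ → ℤ) (hh : ZAIsHammock n x h) :
    (∀ y : ℤ × ℤ, 1 ≤ y.2 → y.2 ≤ n → h (ZASigma n y) = h y) ∧
    (∀ k : ℤ, h ((ZASigma n ^ k) x) = -1) ∧
    (∀ y : ℤ × ℤ, 1 ≤ y.2 → y.2 ≤ n → (∀ k : ℤ, y ≠ (ZASigma n ^ k) x) → 0 ≤ h y) := by
  lift n to ℕ using by lia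
  have hx : 1 ≤ x.2 ∧ x.2 ≤ n := ⟨hx1, hxn⟩
  have h_eq {y : ℤ × ℤ} (hy : 1 ≤ y.2 ∧ y.2 ≤ n) : h y = zaCrossing n x y :=
    hh.unique (zaIsHammock_zaCrossing hx) hxn hy
  have h_orbit {y z : ℤ × ℤ} (hyz : (ZASigma n).SameCycle y z) (hy : 1 ≤ y.2 ∧ y.2 ≤ n) :
      h z = h y := by
    rw [h_eq hy, h_eq ((mem_strip_iff_of_sameCycle hyz).1 hy),
      eq_of_sameCycle (zaCrossing_sigma n x) hyz]
  refine ⟨fun y hy1 hyn ↦ ?_, fun k ↦ ?_, fun y hy1 hyn hyx ↦ ?_⟩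
  · exact h_orbit (sameCycle_apply_right.2 .rfl) ⟨hy1, hyn⟩
  · rw [h_orbit ⟨k, rfl⟩ hx, hh.2.1]
  · rw [h_eq ⟨hy1, hyn⟩]
    exact zaCrossing_nonneg hx ⟨hy1, hyn⟩ fun ⟨k, hk⟩ ↦ hyx k hk.symm
end

section
/- Let n ≥ 1 and let T be a finite set of vertices of ℤA_n lying in pairwise distinct σ-orbits and satisfying h_x(x') = 0 for all x ≠ x' in T. Let (n_x)_{x∈T} be non-negative integers and put f = Σ_{x∈T} n_x·h_x (pointwise). Then f(x) = −n_x for every x ∈ T; f(y) ≥ 0 for every vertex y whose σ-orbit is disjoint from T; and consequently f = Σ_{x∈T} f(x)⁻·h_x. -/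
/-!
A vertex `(i, p)` of `ℤA_n` is the arc from `i` to `i + p + 1`, read modulo `n + 3` as a diagonal of
an `(n + 3)`-gon; the `σ`-orbits are exactly the diagonals. The cluster-hammock function `h_x` is
the signed crossing number with the diagonal `x`: `1` on diagonals crossing it, `-1` on the diagonal
itself, `0` elsewhere. Indeed this crossing number is cluster-additive and has the prescribed values
on the slice through `x`, and a cluster-additive function is determined by its values on a slice. So
`h_x` is negative only on the `σ`-orbit of `x`.
-/

theorem zaSigma_sq (n : ℤ) : ZASigma n ^ 2 = Equiv.addRight (n + 3, 0) := by
  ext ⟨i, p⟩ <;> simp [ZASigma, sq]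
  ring

theorem zaSigma_zpow_two_mul_apply (n k : ℤ) (x : ℤ × ℤ) :
    (ZASigma n ^ (2 * k)) x = (x.1 + k * (n + 3), x.2) := by
  have h_zpow : ZASigma n ^ (2 * k) = Equiv.addRight (k • (n + 3, (0 : ℤ))) := by
    rw [zpow_mul, zpow_ofNat, zaSigma_sq, Equiv.zsmul_addRight]
  ext <;> simp [h_zpow]

theorem zaSigma_zpow_two_mul_add_one_apply (n k : ℤ) (x : ℤ × ℤ) :
    (ZASigma n ^ (2 * k + 1)) x = (x.1 + x.2 + 1 + k * (n + 3), n + 1 - x.2) := by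
  rw [zpow_add_one, Equiv.Perm.mul_apply, zaSigma_zpow_two_mul_apply]
  rfl

namespace ZAClusterAdditive

variable {n : ℤ} {f g : ℤ × ℤ → ℤ}

theorem eq_right_of_mesh (hf : ZAClusterAdditive n f) (hg : ZAClusterAdditive n g) {i p : ℤ}
    (hp : 1 ≤ p) (hpn : p ≤ n) (h_left : f (i - 1, p) = g (i - 1, p))
    (h_below : 2 ≤ p → f (i, p - 1) = g (i, p - 1))
    (h_above : p ≤ n - 1 → f (i - 1, p + 1) = g (i - 1, p + 1)) : f (i, p) = g (i, p) := by
  have hfm := hf i p hp hpn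
  have hgm := hg i p hp hpn
  grind

theorem eq_left_of_mesh (hf : ZAClusterAdditive n f) (hg : ZAClusterAdditive n g) {i p : ℤ}
    (hp : 1 ≤ p) (hpn : p ≤ n) (h_right : f (i + 1, p) = g (i + 1, p))
    (h_below : 2 ≤ p → f (i + 1, p - 1) = g (i + 1, p - 1))
    (h_above : p ≤ n - 1 → f (i, p + 1) = g (i, p + 1)) : f (i, p) = g (i, p) := by
  have hfm := hf (i + 1) p hp hpn
  have hgm := hg (i + 1) p hp hpn
  rw [add_sub_cancel_right] at hfm hgm
  grind

section Slice

variable {x : ℤ × ℤ} (hf : ZAClusterAdditive n f) (hg : ZAClusterAdditive n g)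
  (h_slice : ∀ y, ZAInSlice n x y → f y = g y)

include hf hg h_slice

theorem eq_after_slice {i p : ℤ} (hp : 1 ≤ p) (hpn : p ≤ n) (hi : x.1 ≤ i)
    (hip : x.1 + x.2 ≤ i + p) : f (i, p) = g (i, p) := by
  by_cases h_mem : i = x.1 ∨ i + p = x.1 + x.2
  · exact h_slice _ (by unfold ZAInSlice; omega)
  · exact eq_right_of_mesh hf hg hp hpn
      (eq_after_slice hp hpn (by omega) (by omega))
      (fun _ => eq_after_slice (by omega) (by omega) hi (by omega))
      (fun _ => eq_after_slice (by omega) (by omega) (by omega) (by omega))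
termination_by (2 * (i - x.1) + p - x.2).toNat
decreasing_by all_goals omega

theorem eq_before_slice (hx : 1 ≤ x.2) (hxn : x.2 ≤ n) {i p : ℤ} (hp : 1 ≤ p)
    (hpn : p ≤ n) (hip : i ≤ x.1 ∨ i + p ≤ x.1 + x.2) : f (i, p) = g (i, p) := by
  by_cases h_mem : x.1 ≤ i ∧ x.1 + x.2 ≤ i + p
  · exact h_slice _ (by unfold ZAInSlice; omega)
  · exact eq_left_of_mesh hf hg hp hpn
      (eq_before_slice hx hxn hp hpn (by omega))
      (fun _ => eq_before_slice hx hxn (by omega) (by omega) (by omega))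
      (fun _ => eq_before_slice hx hxn (by omega) (by omega) (by omega))
termination_by (2 * (x.1 - i) + x.2 + n - p).toNat
decreasing_by all_goals omega

theorem eq_of_eq_on_slice_s11 (hx : 1 ≤ x.2) (hxn : x.2 ≤ n) {y : ℤ × ℤ} (hy : 1 ≤ y.2)
    (hyn : y.2 ≤ n) : f y = g y := by
  by_cases h_after : x.1 ≤ y.1 ∧ x.1 + x.2 ≤ y.1 + y.2
  · exact eq_after_slice hf hg h_slice hy hyn h_after.1 h_after.2
  · exact eq_before_slice hf hg h_slice hx hxn hy hyn (by omega)

end Slice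

end ZAClusterAdditive

theorem ZAIsHammock.eq_of_zaIsHammock {n : ℤ} {x y : ℤ × ℤ} {f g : ℤ × ℤ → ℤ}
    (hf : ZAIsHammock n x f) (hg : ZAIsHammock n x g) (hx : 1 ≤ x.2) (hxn : x.2 ≤ n)
    (hy : 1 ≤ y.2) (hyn : y.2 ≤ n) : f y = g y := by
  refine hf.1.eq_of_eq_on_slice_s11 hg.1 (x := x) (fun z hz => ?_) hx hxn hy hyn
  by_cases hzx : z = x
  · rw [hzx, hf.2.1, hg.2.1]
  · rw [hf.2.2 z hz hzx, hg.2.2 z hz hzx]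

/-- The signed crossing number of the arc from `a` to `b` with a set `E` of integers given by a
counting function `C`, so that `C t - C s` is the number of elements of `E` in `(s, t]`: it is `1`
if `E ∩ [a, b]` is a single point other than `a` and `b`, it is `-1` if `E ∩ [a, b] = {a, b}`, and
`0` otherwise. When `E` consists of all lifts of the ends of a diagonal of a polygon, these cases
say that `a` to `b` crosses the diagonal, that it is the diagonal, and that it does neither. -/
def signedCrossing (C : ℤ → ℤ) (a b : ℤ) : ℤ :=
  if C (b - 1) = C a + 1 ∧ C b = C (a - 1) + 1 then 1
  else if C (b - 1) = C a ∧ C b = C (a - 1) + 2 then -1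
  else 0

section SignedCrossing

variable {C : ℤ → ℤ} {a b : ℤ}

theorem signedCrossing_mesh (hC : Monotone C) (h_gap : ∀ t, C (t + 2) ≤ C t + 1)
    (hab : a + 2 ≤ b) (h_window : C b ≤ C (a - 2) + 2) :
    signedCrossing C a b + signedCrossing C (a - 1) (b - 1) =
      max (signedCrossing C a (b - 1)) 0 + max (signedCrossing C (a - 1) b) 0 := by
  have h_chain : C (a - 2) ≤ C (a - 1) ∧ C (a - 1) ≤ C a ∧ C a ≤ C (b - 2) ∧
      C (b - 2) ≤ C (b - 1) ∧ C (b - 1) ≤ C b := by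
    refine ⟨hC ?_, hC ?_, hC ?_, hC ?_, hC ?_⟩ <;> omega
  have h_gap_left : C a ≤ C (a - 2) + 1 := by simpa using h_gap (a - 2)
  have h_gap_right : C b ≤ C (b - 2) + 1 := by simpa using h_gap (b - 2)
  -- Both sides depend only on which of `a - 1`, `a`, `b - 1`, `b` lie in `E` and on the number of
  -- points of `E` in between; they differ only if `E` has adjacent points or three in `[a - 1, b]`.
  simp only [signedCrossing, sub_sub, one_add_one_eq_two]
  split_ifs <;> omega

theorem signedCrossing_succ_nonpos : signedCrossing C a (a + 1) ≤ 0 := by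
  simp only [signedCrossing, add_sub_cancel_right]
  split_ifs <;> omega

theorem signedCrossing_nonpos_of_eq_add_two (h : C b = C (a - 1) + 2) :
    signedCrossing C a b ≤ 0 := by
  unfold signedCrossing
  split_ifs <;> omega

theorem zaClusterAdditive_signedCrossing {n : ℤ} (hC : Monotone C)
    (h_gap : ∀ t, C (t + 2) ≤ C t + 1) (h_period : ∀ t, C (t + (n + 3)) = C t + 2) :
    ZAClusterAdditive n fun y => signedCrossing C y.1 (y.1 + y.2 + 1) := by
  intro i p hp hpn
  have h_mesh := signedCrossing_mesh hC h_gap (a := i) (b := i + p + 1) (by omega)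
    ((hC (by omega)).trans (h_period (i - 2)).le)
  have h_below : p = 1 → signedCrossing C i (i + p) ≤ 0 := by
    rintro rfl
    exact signedCrossing_succ_nonpos
  have h_above : p = n → signedCrossing C (i - 1) (i + p + 1) ≤ 0 := by
    rintro rfl
    exact signedCrossing_nonpos_of_eq_add_two (by rw [← h_period]; congr 1; ring)
  rw [add_sub_cancel_right] at h_mesh
  dsimp only
  rw [show i - 1 + p + 1 = i + p by ring, show i + (p - 1) + 1 = i + p by ring,
    show i - 1 + (p + 1) + 1 = i + p + 1 by ring]
  split_ifs <;> omega

end SignedCrossing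

theorem exists_add_mul_le_lt {N : ℤ} (hN : 0 < N) (s t : ℤ) :
    ∃ k, s + k * N ≤ t ∧ t < s + (k + 1) * N :=
  ⟨(t - s) / N, by linarith [Int.ediv_mul_le (t - s) hN.ne'],
    by linarith [Int.lt_ediv_add_one_mul_self (t - s) hN]⟩

/-- The counting function of the lifts to `ℤ` of the ends `i` and `i + p + 1` of the diagonal
`x = (i, p)` of the `(n + 3)`-gon, normalized to be `0` at `i + p + 1`. -/
def endpointCount (n : ℤ) (x : ℤ × ℤ) (t : ℤ) : ℤ :=
  (t - x.1) / (n + 3) + (t - (x.1 + x.2 + 1)) / (n + 3)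

section EndpointCount

variable {n : ℤ} {x : ℤ × ℤ}

theorem endpointCount_add_period (hn : n + 3 ≠ 0) (t : ℤ) :
    endpointCount n x (t + (n + 3)) = endpointCount n x t + 2 := by
  simp only [endpointCount, add_sub_right_comm t, Int.add_ediv_of_dvd_right, dvd_refl,
    Int.ediv_self hn]
  ring

theorem monotone_endpointCount (hn : 0 < n + 3) : Monotone (endpointCount n x) := fun _ _ hst =>
  add_le_add (Int.ediv_le_ediv hn (sub_le_sub_right hst _))
    (Int.ediv_le_ediv hn (sub_le_sub_right hst _))

theorem endpointCount_eq_odd {k t : ℤ} (hxn : x.2 ≤ n + 2)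
    (h_le : x.1 + k * (n + 3) ≤ t) (h_lt : t < x.1 + x.2 + 1 + k * (n + 3)) :
    endpointCount n x t = 2 * k - 1 := by
  have hn : 0 < n + 3 := by omega
  have h_start : (t - x.1) / (n + 3) = k :=
    (Int.ediv_eq_iff_of_pos hn).2 ⟨by linarith, by linarith⟩
  have h_end : (t - (x.1 + x.2 + 1)) / (n + 3) = k - 1 :=
    (Int.ediv_eq_iff_of_pos hn).2 ⟨by linarith, by linarith⟩
  rw [endpointCount, h_start, h_end]
  ring

theorem endpointCount_eq_even {k t : ℤ} (hx : -1 ≤ x.2)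
    (h_le : x.1 + x.2 + 1 + k * (n + 3) ≤ t) (h_lt : t < x.1 + (k + 1) * (n + 3)) :
    endpointCount n x t = 2 * k := by
  have hn : 0 < n + 3 := by linarith
  have h_start : (t - x.1) / (n + 3) = k :=
    (Int.ediv_eq_iff_of_pos hn).2 ⟨by linarith, by linarith⟩
  have h_end : (t - (x.1 + x.2 + 1)) / (n + 3) = k :=
    (Int.ediv_eq_iff_of_pos hn).2 ⟨by linarith, by linarith⟩
  rw [endpointCount, h_start, h_end]
  ring

theorem endpointCount_add_two_le (hx : 1 ≤ x.2) (hxn : x.2 ≤ n) (t : ℤ) :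
    endpointCount n x (t + 2) ≤ endpointCount n x t + 1 := by
  have h_mono : Monotone (endpointCount n x) := monotone_endpointCount (by omega)
  obtain ⟨k, h_le, h_lt⟩ := exists_add_mul_le_lt (N := n + 3) (by omega) x.1 t
  rcases lt_or_ge t (x.1 + x.2 + 1 + k * (n + 3)) with h_end | h_end
  · calc endpointCount n x (t + 2)
        ≤ endpointCount n x (x.1 + (k + 1) * (n + 3) - 1) := h_mono (by linarith)
      _ = 2 * k := endpointCount_eq_even (by omega) (by linarith) (by omega)
      _ = endpointCount n x t + 1 := by
        rw [endpointCount_eq_odd (by omega) h_le h_end]; ring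
  · calc endpointCount n x (t + 2)
        ≤ endpointCount n x (x.1 + x.2 + (k + 1) * (n + 3)) := h_mono (by linarith)
      _ = 2 * (k + 1) - 1 := endpointCount_eq_odd (by omega) (by linarith) (by omega)
      _ = endpointCount n x t + 1 := by
        rw [endpointCount_eq_even (by omega) h_end h_lt]; ring

theorem exists_eq_endpoint_of_endpointCount_lt {t : ℤ} (hx : 0 ≤ x.2) (hxn : x.2 ≤ n + 2)
    (h_jump : endpointCount n x (t - 1) < endpointCount n x t) :
    ∃ k, (t = x.1 + k * (n + 3) ∧ endpointCount n x t = 2 * k - 1) ∨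
      (t = x.1 + x.2 + 1 + k * (n + 3) ∧ endpointCount n x t = 2 * k) := by
  obtain ⟨k, h_le, h_lt⟩ := exists_add_mul_le_lt (N := n + 3) (by omega) x.1 t
  refine ⟨k, ?_⟩
  rcases lt_or_ge t (x.1 + x.2 + 1 + k * (n + 3)) with h_end | h_end
  · have h_count := endpointCount_eq_odd hxn h_le h_end
    refine Or.inl ⟨le_antisymm (not_lt.1 fun h_start => h_jump.ne ?_) h_le, h_count⟩
    rw [h_count, endpointCount_eq_odd (k := k) hxn (by omega) (by omega)]
  · have h_count := endpointCount_eq_even (by omega) h_end h_lt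
    refine Or.inr ⟨le_antisymm (not_lt.1 fun h_past => h_jump.ne ?_) h_end, h_count⟩
    rw [h_count, endpointCount_eq_even (k := k) (by omega) (by omega) (by omega)]

end EndpointCount

/-- The cluster-hammock function of `x`: the signed crossing number with the diagonal `x` of the
`(n + 3)`-gon, where `y = (i, p)` is read as the arc from `i` to `i + p + 1`. -/
def diagonalCrossing (n : ℤ) (x y : ℤ × ℤ) : ℤ :=
  signedCrossing (endpointCount n x) y.1 (y.1 + y.2 + 1)

section DiagonalCrossing

variable {n : ℤ} {x : ℤ × ℤ}

theorem zaIsHammock_diagonalCrossing (hx : 1 ≤ x.2) (hxn : x.2 ≤ n) :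
    ZAIsHammock n x (diagonalCrossing n x) := by
  have h_before : endpointCount n x (x.1 - 1) = -2 :=
    endpointCount_eq_even (k := -1) (by omega) (by omega) (by omega)
  have h_inside : ∀ t, x.1 ≤ t → t ≤ x.1 + x.2 → endpointCount n x t = -1 := fun t _ _ =>
    endpointCount_eq_odd (k := 0) (by omega) (by omega) (by omega)
  have h_after : ∀ t, x.1 + x.2 + 1 ≤ t → t < x.1 + n + 3 → endpointCount n x t = 0 :=
    fun t _ _ => endpointCount_eq_even (k := 0) (by omega) (by omega) (by omega)
  refine ⟨zaClusterAdditive_signedCrossing (monotone_endpointCount (by omega))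
    (endpointCount_add_two_le hx hxn) (endpointCount_add_period (by omega)), ?_, ?_⟩
  · rw [diagonalCrossing, signedCrossing, add_sub_cancel_right, h_before,
      h_inside x.1 (by omega) (by omega), h_inside (x.1 + x.2) (by omega) (by omega),
      h_after (x.1 + x.2 + 1) (by omega) (by omega)]
    norm_num
  · rintro ⟨i, q⟩ (⟨hi, hpq, hqn⟩ | ⟨hi, hq, hqp⟩) hne <;> dsimp only at *
    · have hpq' : x.2 < q := hpq.lt_of_ne fun h => hne (Prod.ext hi h.symm)
      rw [diagonalCrossing, signedCrossing, add_sub_cancel_right, hi, h_before,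
        h_inside x.1 (by omega) (by omega), h_after (x.1 + q) (by omega) (by omega),
        h_after (x.1 + q + 1) (by omega) (by omega)]
      norm_num
    · rw [diagonalCrossing, signedCrossing, add_sub_cancel_right, hi, sub_add_cancel,
        h_inside (x.1 + x.2 - q) (by omega) (by omega),
        h_inside (x.1 + x.2 - q - 1) (by omega) (by omega),
        h_inside (x.1 + x.2) (by omega) (by omega),
        h_after (x.1 + x.2 + 1) (by omega) (by omega)]
      norm_num

theorem exists_zaSigma_zpow_eq_of_diagonalCrossing_neg {y : ℤ × ℤ} (hx : 1 ≤ x.2) (hxn : x.2 ≤ n)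
    (h_neg : diagonalCrossing n x y < 0) : ∃ k : ℤ, (ZASigma n ^ k) x = y := by
  obtain ⟨i, q⟩ := y
  have h_count : endpointCount n x (i + q) = endpointCount n x i ∧
      endpointCount n x (i + q + 1) = endpointCount n x (i - 1) + 2 := by
    rw [diagonalCrossing, signedCrossing, add_sub_cancel_right] at h_neg
    split_ifs at h_neg <;> first | assumption | omega
  have h_step : ∀ t, endpointCount n x (t + 1) ≤ endpointCount n x t + 1 := fun t =>
    (monotone_endpointCount (by omega) (by omega)).trans (endpointCount_add_two_le hx hxn t)
  have h_step_end := h_step (i + q)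
  have h_step_start := h_step (i - 1)
  rw [sub_add_cancel] at h_step_start
  obtain ⟨k, h_start⟩ := exists_eq_endpoint_of_endpointCount_lt (x := x) (n := n) (t := i)
    (by omega) (by omega) (by omega)
  obtain ⟨l, h_end⟩ := exists_eq_endpoint_of_endpointCount_lt (x := x) (n := n) (t := i + q + 1)
    (by omega) (by omega) (by rw [add_sub_cancel_right]; omega)
  -- `endpointCount` grows by one from `i` to `i + q + 1`, and is odd at the lifts of `x.1`, even at
  -- those of `x.1 + x.2 + 1`: so the arc joins two consecutive lifts of different ends.
  rcases h_start with ⟨hi, hk⟩ | ⟨hi, hk⟩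
  · obtain ⟨hq, rfl⟩ : i + q + 1 = x.1 + x.2 + 1 + l * (n + 3) ∧ l = k := by omega
    exact ⟨2 * l, by rw [zaSigma_zpow_two_mul_apply]; ext <;> dsimp only <;> omega⟩
  · obtain ⟨hq, rfl⟩ : i + q + 1 = x.1 + l * (n + 3) ∧ l = k + 1 := by omega
    rw [add_mul] at hq
    exact ⟨2 * k + 1, by rw [zaSigma_zpow_two_mul_add_one_apply]; ext <;> dsimp only <;> omega⟩

end DiagonalCrossing

theorem ZAIsHammock.nonneg {n : ℤ} {x y : ℤ × ℤ} {h : ℤ × ℤ → ℤ} (hh : ZAIsHammock n x h)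
    (hx : 1 ≤ x.2) (hxn : x.2 ≤ n) (hy : 1 ≤ y.2) (hyn : y.2 ≤ n)
    (h_orbit : ∀ k : ℤ, (ZASigma n ^ k) x ≠ y) : 0 ≤ h y := by
  rw [hh.eq_of_zaIsHammock (zaIsHammock_diagonalCrossing hx hxn) hx hxn hy hyn]
  by_contra! h_neg
  obtain ⟨k, hk⟩ := exists_zaSigma_zpow_eq_of_diagonalCrossing_neg hx hxn h_neg
  exact h_orbit k hk

theorem stmt_11 (n : ℤ) (hn : 1 ≤ n) (T : Finset (ℤ × ℤ))
    (hT : ∀ x ∈ T, 1 ≤ x.2 ∧ x.2 ≤ n)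
    (h : ℤ × ℤ → ℤ × ℤ → ℤ) (hh : ∀ x ∈ T, ZAIsHammock n x (h x))
    (horbits : ∀ x ∈ T, ∀ x' ∈ T, x ≠ x' → ∀ k : ℤ, (ZASigma n ^ k) x ≠ x')
    (hvanish : ∀ x ∈ T, ∀ x' ∈ T, x ≠ x' → h x x' = 0)
    (c : ℤ × ℤ → ℕ)
    (f : ℤ × ℤ → ℤ) (hf : ∀ y, f y = ∑ x ∈ T, (c x : ℤ) * h x y) :
    (∀ x ∈ T, f x = -(c x : ℤ)) ∧
    (∀ y : ℤ × ℤ, 1 ≤ y.2 → y.2 ≤ n → (∀ x ∈ T, ∀ k : ℤ, (ZASigma n ^ k) x ≠ y) → 0 ≤ f y) ∧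
    (∀ y : ℤ × ℤ, 1 ≤ y.2 → y.2 ≤ n → f y = ∑ x ∈ T, max (-f x) 0 * h x y) := by
  have h_apply : ∀ x ∈ T, f x = -(c x : ℤ) := fun x hx => by
    rw [hf, Finset.sum_eq_single_of_mem x hx fun x' hx' hne => by
      rw [hvanish x' hx' x hx hne, mul_zero], (hh x hx).2.1, mul_neg_one]
  refine ⟨h_apply, fun y hy hyn h_orbit => ?_, fun y _ _ => ?_⟩
  · rw [hf]
    exact Finset.sum_nonneg fun x hx => mul_nonneg (Int.natCast_nonneg _)
      ((hh x hx).nonneg (hT x hx).1 (hT x hx).2 hy hyn (h_orbit x hx))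
  · rw [hf]
    exact Finset.sum_congr rfl fun x hx => by
      rw [h_apply x hx, neg_neg, max_eq_left (Int.natCast_nonneg _)]
end

section
/- (Rectangle rule.) Let s, t ≥ 1 and let f : {0,…,s} × {0,…,t} → ℤ satisfy the mesh relations f(a,b) + f(a−1,b−1) = f(a−1,b)⁺ + f(a,b−1)⁺ for all 1 ≤ a ≤ s, 1 ≤ b ≤ t, and assume f(0,0) ≤ 0. Then f(s,t) = f(0,0)⁻ + Σ_{i=1}^{s−1} f(i,0)⁻ + f(s,0)⁺ + Σ_{j=1}^{t−1} f(0,j)⁻ + f(0,t)⁺. In particular f(s,t) ≥ f(0,0)⁻ ≥ 0. -/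
/-!
Each mesh relation says that `f (a, b) - f (a - 1, b)⁺ = f (a, b - 1)⁺ - f (a - 1, b - 1)`. Along
the upper row of a strip of meshes the left-hand sides telescope as soon as the interior values are
nonnegative, so the upper row is determined by its first value and by the *sectional sum*
`∑ (x (j + 1)⁺ - x j)` of the lower row. Passing from the row `x` to the next row `y` then changes
the sectional sum only by the constant `(y 0)⁻`. As `f (0, 0) ≤ 0` makes the first sectional sums
nonnegative, the nonnegativity needed for telescoping propagates from row to row.
-/

open Finset

section SectionalSum

variable {G : Type*} [AddCommGroup G] [Lattice G]

/-- The sum of the increments `x (j + 1)⁺ - x j` along the sectional path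
`x 0 → x 1 → ⋯ → x n`. It differs from `x n - x 0` by the truncations `⁺` in the mesh relations. -/
def sectionalSum (x : ℕ → G) (n : ℕ) : G :=
  ∑ j ∈ range n, ((x (j + 1))⁺ - x j)

lemma sectionalSum_succ (x : ℕ → G) (n : ℕ) :
    sectionalSum x (n + 1) = sectionalSum x n + ((x (n + 1))⁺ - x n) :=
  sum_range_succ _ _

lemma sectionalSum_zero (x : ℕ → G) : sectionalSum x 0 = 0 :=
  sum_range_zero _

lemma sectionalSum_eq_sub {x : ℕ → G} {n : ℕ} (hx : ∀ j < n, 0 ≤ x (j + 1)) :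
    sectionalSum x n = x n - x 0 := by
  rw [← sum_range_sub]
  refine sum_congr rfl fun j hj ↦ ?_
  rw [posPart_of_nonneg (hx j (mem_range.mp hj))]

variable [IsOrderedAddMonoid G]

lemma sectionalSum_succ_eq (x : ℕ → G) (n : ℕ) :
    sectionalSum x (n + 1) = -x 0 + ∑ j ∈ range n, (x (j + 1))⁻ + (x (n + 1))⁺ := by
  induction n with
  | zero => simp only [sectionalSum, sum_range_succ, range_zero, sum_empty]; abel
  | succ n ih =>
    have hsplit : (x (n + 1))⁺ - x (n + 1) = (x (n + 1))⁻ :=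
      sub_eq_iff_eq_add'.mpr (sub_eq_iff_eq_add.mp (posPart_sub_negPart _))
    rw [sectionalSum_succ, ih, sum_range_succ, ← hsplit]
    abel

lemma sectionalSum_nonneg {x : ℕ → G} (hx : x 0 ≤ 0) : ∀ n, 0 ≤ sectionalSum x n
  | 0 => (sectionalSum_zero x).ge
  | n + 1 => by
    rw [sectionalSum_succ_eq]
    exact add_nonneg
      (add_nonneg (neg_nonneg.mpr hx) (sum_nonneg fun _ _ ↦ negPart_nonneg _)) (posPart_nonneg _)

end SectionalSum

section MeshStrip

variable {G : Type*} [AddCommGroup G] [Lattice G]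

/-- The mesh relations in a strip of `n` consecutive meshes, with lower row `x` and upper row `y`;
the translation sends the vertex of `y (j + 1)` to that of `x j`. -/
def IsMeshStrip (n : ℕ) (x y : ℕ → G) : Prop :=
  ∀ j < n, y (j + 1) + x j = (y j)⁺ + (x (j + 1))⁺

namespace IsMeshStrip

variable [IsOrderedAddMonoid G] {n : ℕ} {x y : ℕ → G}

lemma apply_succ (h : IsMeshStrip n x y) (hx : ∀ j ≤ n, 0 ≤ sectionalSum x j) :
    ∀ a < n, y (a + 1) = (y 0)⁺ + sectionalSum x (a + 1) := by
  have hstep (a : ℕ) (ha : a < n) : y (a + 1) = (y a)⁺ + ((x (a + 1))⁺ - x a) := by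
    rw [← add_sub_assoc, ← h a ha, add_sub_cancel_right]
  intro a
  induction a with
  | zero =>
    intro ha
    rw [hstep 0 ha, sectionalSum_succ, sectionalSum_zero, zero_add (_ - _)]
  | succ a ih =>
    intro ha
    have hy : y (a + 1) = (y 0)⁺ + sectionalSum x (a + 1) := ih (Nat.lt_of_succ_lt ha)
    have hy_nonneg : 0 ≤ y (a + 1) := hy ▸ add_nonneg (posPart_nonneg _) (hx _ ha.le)
    rw [hstep _ ha, posPart_of_nonneg hy_nonneg, hy, sectionalSum_succ x (a + 1), add_assoc]

lemma sectionalSum_upper_succ (h : IsMeshStrip n x y) (hx : ∀ j ≤ n, 0 ≤ sectionalSum x j)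
    {a : ℕ} (ha : a < n) :
    sectionalSum y (a + 1) = (y 0)⁻ + sectionalSum x (a + 1) := by
  have hy_nonneg (j : ℕ) (hj : j < a + 1) : 0 ≤ y (j + 1) := by
    rw [h.apply_succ hx j (by lia)]
    exact add_nonneg (posPart_nonneg _) (hx _ (by lia))
  calc sectionalSum y (a + 1) = y (a + 1) - y 0 := sectionalSum_eq_sub hy_nonneg
    _ = (y 0)⁺ + sectionalSum x (a + 1) - ((y 0)⁺ - (y 0)⁻) := by
      rw [h.apply_succ hx a ha, posPart_sub_negPart]
    _ = (y 0)⁻ + sectionalSum x (a + 1) := by abel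

end IsMeshStrip

end MeshStrip

section Rectangle

variable {G : Type*} [AddCommGroup G] [Lattice G] [IsOrderedAddMonoid G]

-- The row index comes first: `r b a` is the value at the vertex `(a, b)`.
lemma sectionalSum_row_nonneg_and_eq {s t : ℕ} {r : ℕ → ℕ → G}
    (hr : ∀ b < t, IsMeshStrip s (r b) (r (b + 1))) (h0 : r 0 0 ≤ 0) :
    ∀ b ≤ t, (∀ j ≤ s, 0 ≤ sectionalSum (r b) j) ∧
      ∀ a < s, sectionalSum (r b) (a + 1) =
        ∑ j ∈ range b, (r (j + 1) 0)⁻ + sectionalSum (r 0) (a + 1) := by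
  intro b
  induction b with
  | zero => exact fun _ ↦ ⟨fun j _ ↦ sectionalSum_nonneg h0 j, fun a _ ↦ by simp⟩
  | succ b ih =>
    intro hb
    obtain ⟨hnonneg, heq⟩ := ih (Nat.le_of_succ_le hb)
    have hstrip {a : ℕ} (ha : a < s) := (hr b hb).sectionalSum_upper_succ hnonneg ha
    refine ⟨fun j hj ↦ ?_, fun a ha ↦ ?_⟩
    · cases j with
      | zero => exact (sectionalSum_zero _).ge
      | succ a => exact hstrip hj ▸ add_nonneg (negPart_nonneg _) (hnonneg _ hj)
    · rw [hstrip ha, heq a ha, sum_range_succ]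
      abel

theorem rectangle_rule {m n : ℕ} {r : ℕ → ℕ → G}
    (hr : ∀ b < n + 1, IsMeshStrip (m + 1) (r b) (r (b + 1))) (h0 : r 0 0 ≤ 0) :
    r (n + 1) (m + 1) = (r 0 0)⁻ + ∑ i ∈ range m, (r 0 (i + 1))⁻ + (r 0 (m + 1))⁺
      + ∑ j ∈ range n, (r (j + 1) 0)⁻ + (r (n + 1) 0)⁺ := by
  obtain ⟨hnonneg, heq⟩ := sectionalSum_row_nonneg_and_eq hr h0 n n.le_succ
  rw [(hr n n.lt_succ_self).apply_succ hnonneg m m.lt_succ_self, heq m m.lt_succ_self,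
    sectionalSum_succ_eq, negPart_of_nonpos h0]
  abel

theorem negPart_le_apply_succ_succ {m n : ℕ} {r : ℕ → ℕ → G}
    (hr : ∀ b < n + 1, IsMeshStrip (m + 1) (r b) (r (b + 1))) (h0 : r 0 0 ≤ 0) :
    (r 0 0)⁻ ≤ r (n + 1) (m + 1) := by
  have hsum (k : ℕ) (x : ℕ → G) : 0 ≤ ∑ i ∈ range k, (x i)⁻ :=
    sum_nonneg fun _ _ ↦ negPart_nonneg _
  calc (r 0 0)⁻ ≤ (r 0 0)⁻ + ∑ i ∈ range m, (r 0 (i + 1))⁻ := le_add_of_nonneg_right (hsum m _)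
    _ ≤ _ + (r 0 (m + 1))⁺ := le_add_of_nonneg_right (posPart_nonneg _)
    _ ≤ _ + ∑ j ∈ range n, (r (j + 1) 0)⁻ := le_add_of_nonneg_right (hsum n _)
    _ ≤ _ + (r (n + 1) 0)⁺ := le_add_of_nonneg_right (posPart_nonneg _)
    _ = r (n + 1) (m + 1) := (rectangle_rule hr h0).symm

end Rectangle

lemma sum_Icc_one_natCast {M : Type*} [AddCommMonoid M] (g : ℤ → M) (n : ℕ) :
    ∑ i ∈ Icc (1 : ℤ) n, g i = ∑ i ∈ range n, g (i + 1) := by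
  simp [Int.Icc_eq_finset_map, add_comm]

theorem stmt_12_general {G : Type*} [AddCommGroup G] [Lattice G] [IsOrderedAddMonoid G]
    {s t : ℤ} (hs : 1 ≤ s) (ht : 1 ≤ t) {f : ℤ × ℤ → G}
    (hmesh : ∀ a b : ℤ, 1 ≤ a → a ≤ s → 1 ≤ b → b ≤ t →
      f (a, b) + f (a - 1, b - 1) = (f (a - 1, b))⁺ + (f (a, b - 1))⁺)
    (hx : f (0, 0) ≤ 0) :
    f (s, t) = (f (0, 0))⁻ + ∑ i ∈ Icc 1 (s - 1), (f (i, 0))⁻ + (f (s, 0))⁺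
      + ∑ j ∈ Icc 1 (t - 1), (f (0, j))⁻ + (f (0, t))⁺ ∧
    (f (0, 0))⁻ ≤ f (s, t) := by
  obtain ⟨m, hm⟩ := Int.eq_ofNat_of_zero_le (sub_nonneg.mpr hs)
  obtain ⟨n, hn⟩ := Int.eq_ofNat_of_zero_le (sub_nonneg.mpr ht)
  obtain rfl : s = m + 1 := by lia
  obtain rfl : t = n + 1 := by lia
  let r (b a : ℕ) : G := f (a, b)
  have hr : ∀ b < n + 1, IsMeshStrip (m + 1) (r b) (r (b + 1)) := fun b hb a ha ↦ by
    simpa [r] using hmesh (a + 1) (b + 1) (by lia) (by lia) (by lia) (by lia)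
  rw [hm, hn, sum_Icc_one_natCast, sum_Icc_one_natCast]
  exact ⟨by exact_mod_cast rectangle_rule hr hx, by exact_mod_cast negPart_le_apply_succ_succ hr hx⟩

theorem stmt_12 (s t : ℤ) (hs : 1 ≤ s) (ht : 1 ≤ t) (f : ℤ × ℤ → ℤ)
    (hmesh : ∀ a b : ℤ, 1 ≤ a → a ≤ s → 1 ≤ b → b ≤ t →
      f (a, b) + f (a - 1, b - 1) = max (f (a - 1, b)) 0 + max (f (a, b - 1)) 0)
    (hx : f (0, 0) ≤ 0) :
    f (s, t) = max (-f (0, 0)) 0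
      + (∑ i ∈ Finset.Icc 1 (s - 1), max (-f (i, 0)) 0) + max (f (s, 0)) 0
      + (∑ j ∈ Finset.Icc 1 (t - 1), max (-f (0, j)) 0) + max (f (0, t)) 0 ∧
    max (-f (0, 0)) 0 ≤ f (s, t) ∧ 0 ≤ max (-f (0, 0)) 0 := by
  obtain ⟨hvalue, hbound⟩ := stmt_12_general hs ht hmesh hx
  exact ⟨hvalue, hbound, le_max_right _ _⟩
end

section
/- (Wing lemma.) Let s ≥ 0, t ≥ 1 and m = s+t+1. Let W = {(i,j) ∈ ℤ × ℤ : 1 ≤ i ≤ j ≤ m} and let f : W → ℤ satisfy, for all 2 ≤ i ≤ j ≤ m, the mesh relation f(i,j) + f(i−1,j−1) = f(i−1,j)⁺ + (f(i,j−1)⁺ if i ≤ j−1, else 0). Assume: f(1,s) ≤ 0 in case s ≥ 1; f(1,s+k) ≥ 0 for all 1 ≤ k ≤ t; and f(1,m) ≤ 0. Then f(s+2, m) = −min{ f(1,s+k) : 1 ≤ k ≤ t }, and moreover f(i,j) ≥ 0 for all (i,j) with 1 ≤ i ≤ s+1, s+1 ≤ j ≤ m and (i,j) ≠ (1,m). 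-/
/-!
In column `s + 1`, cluster-additivity makes `f (i, s + 1) - f (i, s)⁺` nondecreasing in `i`, so
`f (1, s) ≤ 0` forces `f (1, s + 1) ≤ f (i, s + 1)` for `i ≤ s + 1`. That the entry in row `1` is
minimal among the first `s + 1` rows then propagates to the next column as long as it is
nonnegative: the mesh relations lose their inner positive parts and telescope along the column to
`f (i + 1, j + 1) = f (1, j + 1)⁺ - (f (1, j) - f (i + 1, j)⁺)`, also for `i + 1 = s + 2`.
On that last row the quantity `v j = f (1, j) - f (s + 2, j)⁺` therefore satisfies
`v (j + 1) = f (1, j + 1) ⊓ v j`, that is, `v` is the running minimum of row `1`.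
-/

open Finset

theorem eq_inf'_Icc_of_succ_eq_inf {α : Type*} [SemilatticeInf α] {u v : ℤ → α} {a b : ℤ}
    (hab : a ≤ b) (hbase : v a = u a)
    (hsucc : ∀ k, a ≤ k → k < b → v (k + 1) = u (k + 1) ⊓ v k) :
    v b = (Icc a b).inf' (nonempty_Icc.2 hab) u := by
  induction b, hab using Int.leInduction with
  | base => simp [hbase]
  | succ k hk ih =>
    have hinsert : Icc a (k + 1) = insert (k + 1) (Icc a k) := by
      ext l
      simp only [mem_Icc, mem_insert]
      omega
    have ih := ih fun l hl hlk ↦ hsucc l hl (by omega)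
    simp only [hsucc k hk (by omega), ih, hinsert, inf'_insert (nonempty_Icc.2 hk)]

section Wing

variable {G : Type*} [AddCommGroup G] [Lattice G]

/-- The positive part of `f` at the vertex `(i, j)`, extended by zero below the diagonal, where the
wing has no vertex. -/
def wingPosPart (f : ℤ × ℤ → G) (i j : ℤ) : G :=
  if i ≤ j then (f (i, j))⁺ else 0

/-- Cluster-additivity of `f` on the wing `1 ≤ i ≤ j ≤ m` of rank `m`: the mesh relation holds at
every vertex `(i, j)` whose translate `(i - 1, j - 1)` lies in the wing. The function is total, with
its values outside the wing irrelevant. -/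
def IsClusterAdditive (m : ℤ) (f : ℤ × ℤ → G) : Prop :=
  ∀ i j : ℤ, 2 ≤ i → i ≤ j → j ≤ m →
    f (i, j) + f (i - 1, j - 1) = (f (i - 1, j))⁺ + wingPosPart f i (j - 1)

theorem wingPosPart_of_le {f : ℤ × ℤ → G} {i j : ℤ} (hij : i ≤ j) :
    wingPosPart f i j = (f (i, j))⁺ :=
  if_pos hij

theorem wingPosPart_of_lt {f : ℤ × ℤ → G} {i j : ℤ} (hji : j < i) : wingPosPart f i j = 0 :=
  if_neg hji.not_ge

theorem wingPosPart_nonneg (f : ℤ × ℤ → G) (i j : ℤ) : 0 ≤ wingPosPart f i j := by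
  unfold wingPosPart
  split_ifs
  exacts [posPart_nonneg _, le_rfl]

namespace IsClusterAdditive

variable {m : ℤ} {f : ℤ × ℤ → G}

theorem apply_succ_succ (hf : IsClusterAdditive m f) {i j : ℤ} (hi : 1 ≤ i) (hij : i ≤ j)
    (hj : j < m) :
    f (i + 1, j + 1) = (f (i, j + 1))⁺ + wingPosPart f (i + 1) j - f (i, j) := by
  have hmesh := hf (i + 1) (j + 1) (by omega) (by omega) (by omega)
  rw [add_sub_cancel_right, add_sub_cancel_right] at hmesh
  exact eq_sub_of_add_eq hmesh

variable [IsOrderedAddMonoid G]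

theorem sub_wingPosPart_le_succ (hf : IsClusterAdditive m f) {i j : ℤ} (hi : 1 ≤ i) (hij : i ≤ j)
    (hj : j < m) :
    f (i, j + 1) - wingPosPart f i j ≤ f (i + 1, j + 1) - wingPosPart f (i + 1) j :=
  calc
    f (i, j + 1) - wingPosPart f i j ≤ (f (i, j + 1))⁺ - f (i, j) := by
      rw [wingPosPart_of_le hij]
      exact sub_le_sub (le_posPart _) (le_posPart _)
    _ = f (i + 1, j + 1) - wingPosPart f (i + 1) j := by
      rw [hf.apply_succ_succ hi hij hj]
      abel

theorem first_sub_wingPosPart_le (hf : IsClusterAdditive m f) {i j : ℤ} (hi : 1 ≤ i)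
    (hij : i ≤ j + 1) (hj : j < m) :
    f (1, j + 1) - wingPosPart f 1 j ≤ f (i, j + 1) - wingPosPart f i j := by
  induction i, hi using Int.leInduction with
  | base => exact le_rfl
  | succ i hi ih =>
    exact (ih (by omega)).trans (hf.sub_wingPosPart_le_succ hi (by omega) hj)

theorem isMinOn_column_of_nonpos (hf : IsClusterAdditive m f) {j : ℤ} (hj : j < m)
    (hnonpos : 1 ≤ j → f (1, j) ≤ 0) :
    IsMinOn (fun i ↦ f (i, j + 1)) (Set.Icc 1 (j + 1)) 1 := by
  have hzero : wingPosPart f 1 j = 0 := by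
    unfold wingPosPart
    split_ifs with h
    exacts [posPart_eq_zero.2 (hnonpos h), rfl]
  rintro i ⟨hi, hij⟩
  calc
    f (1, j + 1) = f (1, j + 1) - wingPosPart f 1 j := by rw [hzero, sub_zero]
    _ ≤ f (i, j + 1) - wingPosPart f i j := hf.first_sub_wingPosPart_le hi hij hj
    _ ≤ f (i, j + 1) := sub_le_self _ (wingPosPart_nonneg f i j)

section MinimalFirstRow

variable {r j : ℤ}

theorem apply_succ_succ_of_isMinOn (hf : IsClusterAdditive m f) (hrj : r ≤ j) (hj : j < m)
    (hnonneg : 0 ≤ f (1, j)) (hmin : IsMinOn (fun i ↦ f (i, j)) (Set.Icc 1 r) 1)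
    {i : ℤ} (hi : 1 ≤ i) (hir : i ≤ r) :
    f (i + 1, j + 1) = (f (1, j + 1))⁺ - (f (1, j) - wingPosPart f (i + 1) j) := by
  induction i, hi using Int.leInduction with
  | base =>
    rw [hf.apply_succ_succ le_rfl (by omega) hj]
    abel
  | succ i hi ih =>
    have hle : f (1, j) ≤ f (i + 1, j) := hmin ⟨by omega, hir⟩
    have hprev : f (i + 1, j + 1) = (f (1, j + 1))⁺ + (f (i + 1, j) - f (1, j)) := by
      rw [ih (by omega), wingPosPart_of_le (by omega), posPart_of_nonneg (hnonneg.trans hle)]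
      abel
    have hprev_nonneg : 0 ≤ f (i + 1, j + 1) :=
      hprev ▸ add_nonneg (posPart_nonneg _) (sub_nonneg.2 hle)
    rw [hf.apply_succ_succ (by omega) (by omega) hj, posPart_of_nonneg hprev_nonneg, hprev]
    abel

theorem posPart_first_le_of_isMinOn (hf : IsClusterAdditive m f) (hrj : r ≤ j) (hj : j < m)
    (hnonneg : 0 ≤ f (1, j)) (hmin : IsMinOn (fun i ↦ f (i, j)) (Set.Icc 1 r) 1)
    {i : ℤ} (hi : 2 ≤ i) (hir : i ≤ r) :
    (f (1, j + 1))⁺ ≤ f (i, j + 1) := by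
  have heq := hf.apply_succ_succ_of_isMinOn hrj hj hnonneg hmin (i := i - 1) (by omega) (by omega)
  rw [sub_add_cancel, wingPosPart_of_le (by omega)] at heq
  have hle : f (1, j) ≤ (f (i, j))⁺ := (hmin ⟨by omega, hir⟩).trans (le_posPart _)
  rw [heq]
  exact (le_sub_self_iff _).2 (sub_nonpos.2 hle)

theorem isMinOn_column_succ (hf : IsClusterAdditive m f) (hrj : r ≤ j) (hj : j < m)
    (hnonneg : 0 ≤ f (1, j)) (hmin : IsMinOn (fun i ↦ f (i, j)) (Set.Icc 1 r) 1) :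
    IsMinOn (fun i ↦ f (i, j + 1)) (Set.Icc 1 r) 1 := by
  rintro i ⟨hi, hir⟩
  obtain rfl | hi := hi.eq_or_lt
  · exact le_rfl
  · exact (le_posPart _).trans (hf.posPart_first_le_of_isMinOn hrj hj hnonneg hmin hi hir)

theorem isMinOn_column (hf : IsClusterAdditive m f)
    (hnonneg : ∀ k, r ≤ k → k < m → 0 ≤ f (1, k))
    (hmin : IsMinOn (fun i ↦ f (i, r)) (Set.Icc 1 r) 1) (hrj : r ≤ j) (hj : j ≤ m) :
    IsMinOn (fun i ↦ f (i, j)) (Set.Icc 1 r) 1 := by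
  induction j, hrj using Int.leInduction with
  | base => exact hmin
  | succ k hrk ih =>
    exact hf.isMinOn_column_succ hrk (by omega) (hnonneg k hrk (by omega)) (ih (by omega))

theorem nonneg_of_isMinOn_column (hf : IsClusterAdditive m f)
    (hnonneg : ∀ k, r ≤ k → k < m → 0 ≤ f (1, k))
    (hmin : IsMinOn (fun i ↦ f (i, r)) (Set.Icc 1 r) 1) (hrm : r < m)
    {i : ℤ} (hi : 1 ≤ i) (hir : i ≤ r) (hrj : r ≤ j) (hj : j ≤ m) (hne : (i, j) ≠ (1, m)) :
    0 ≤ f (i, j) := by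
  obtain hjm | rfl := hj.lt_or_eq
  · exact (hnonneg j hrj hjm).trans (hf.isMinOn_column hnonneg hmin hrj hj ⟨hi, hir⟩)
  · have hi_ne : i ≠ 1 := fun h ↦ hne (by rw [h])
    have hlast := hf.posPart_first_le_of_isMinOn (j := j - 1) (by omega) (by omega)
      (hnonneg _ (by omega) (by omega)) (hf.isMinOn_column hnonneg hmin (by omega) (by omega))
      (show 2 ≤ i by omega) hir
    rw [sub_add_cancel] at hlast
    exact (posPart_nonneg _).trans hlast

theorem first_sub_wingPosPart_succ (hf : IsClusterAdditive m f) (hr : 1 ≤ r) (hrj : r ≤ j)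
    (hj : j < m) (hnonneg : 0 ≤ f (1, j)) (hnonneg_succ : 0 ≤ f (1, j + 1))
    (hmin : IsMinOn (fun i ↦ f (i, j)) (Set.Icc 1 r) 1) :
    f (1, j + 1) - wingPosPart f (r + 1) (j + 1) =
      f (1, j + 1) ⊓ (f (1, j) - wingPosPart f (r + 1) j) := by
  rw [wingPosPart_of_le (by omega), hf.apply_succ_succ_of_isMinOn hrj hj hnonneg hmin hr le_rfl,
    posPart_of_nonneg hnonneg_succ, inf_eq_sub_posPart_sub]

end MinimalFirstRow

end IsClusterAdditive

theorem stmt_15_general [IsOrderedAddMonoid G] {s t : ℤ} (hs : 0 ≤ s) (ht : 1 ≤ t)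
    {f : ℤ × ℤ → G} (hf : IsClusterAdditive (s + t + 1) f) (hnonpos : 1 ≤ s → f (1, s) ≤ 0)
    (hnonneg : ∀ k : ℤ, 1 ≤ k → k ≤ t → 0 ≤ f (1, s + k)) :
    f (s + 2, s + t + 1) = (f (1, s + t + 1))⁺ -
      (Icc 1 t).inf' (nonempty_Icc.2 ht) (fun k ↦ f (1, s + k)) ∧
    ∀ i j : ℤ, 1 ≤ i → i ≤ s + 1 → s + 1 ≤ j → j ≤ s + t + 1 → (i, j) ≠ (1, s + t + 1) →
      0 ≤ f (i, j) := by
  have hrow : ∀ j, s + 1 ≤ j → j < s + t + 1 → 0 ≤ f (1, j) := fun j hsj hj ↦ by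
    simpa only [add_sub_cancel] using hnonneg (j - s) (by omega) (by omega)
  have hbase := hf.isMinOn_column_of_nonpos (by omega) hnonpos
  have hmin : ∀ k, 1 ≤ k → k ≤ t → IsMinOn (fun i ↦ f (i, s + k)) (Set.Icc 1 (s + 1)) 1 :=
    fun k hk hkt ↦ hf.isMinOn_column hrow hbase (by omega) (by omega)
  have hrunning := eq_inf'_Icc_of_succ_eq_inf (u := fun k ↦ f (1, s + k))
    (v := fun k ↦ f (1, s + k) - wingPosPart f (s + 1 + 1) (s + k)) ht
    (by simp only [wingPosPart_of_lt (lt_add_one (s + 1)), sub_zero])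
    fun k hk hkt ↦ by
      simpa only [add_assoc] using hf.first_sub_wingPosPart_succ (j := s + k) (by omega) (by omega)
        (by omega) (hnonneg k hk hkt.le) (hrow _ (by omega) (by omega)) (hmin k hk hkt.le)
  refine ⟨?_, fun i j hi his hsj hj hne ↦
    hf.nonneg_of_isMinOn_column hrow hbase (by omega) hi his hsj hj hne⟩
  rw [← hrunning, show s + 2 = s + 1 + 1 by ring]
  exact hf.apply_succ_succ_of_isMinOn (by omega) (by omega) (hnonneg t ht le_rfl)
    (hmin t ht le_rfl) (by omega) le_rfl

end Wing

theorem stmt_15 (s t : ℤ) (hs : 0 ≤ s) (ht : 1 ≤ t) (m : ℤ) (hm : m = s + t + 1)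
    (f : ℤ × ℤ → ℤ)
    (hmesh : ∀ i j : ℤ, 2 ≤ i → i ≤ j → j ≤ m →
      f (i, j) + f (i - 1, j - 1) =
        max (f (i - 1, j)) 0 + (if i ≤ j - 1 then max (f (i, j - 1)) 0 else 0))
    (h1 : 1 ≤ s → f (1, s) ≤ 0)
    (h2 : ∀ k : ℤ, 1 ≤ k → k ≤ t → 0 ≤ f (1, s + k))
    (h3 : f (1, m) ≤ 0) :
    f (s + 2, m) =
      -((Finset.Icc (1 : ℤ) t).inf' (Finset.nonempty_Icc.mpr ht) (fun k => f (1, s + k))) ∧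
    ∀ i j : ℤ, 1 ≤ i → i ≤ s + 1 → s + 1 ≤ j → j ≤ m → (i, j) ≠ (1, m) → 0 ≤ f (i, j) := by
  subst hm
  simpa only [posPart_eq_zero.2 h3, zero_sub] using stmt_15_general hs ht hmesh h1 h2
end

section
/- Let n ≥ 2 and let f be a cluster-additive function on ℤA_n. If z = (i,p) is a vertex with f(z) ≤ 0, then there exists a vertex z' ≠ z with f(z') ≤ 0 which lies on a common sectional path with z, i.e. z' ∈ {(i,q) : 1 ≤ q ≤ n} ∪ {(i+p−q, q) : 1 ≤ q ≤ n}. -/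
/-!
Compare two neighbouring diagonals rung by rung. If `f (i, p)⁺ < f (i - 1, p + 1)`, the mesh
relation at `(i, p + 1)` gives `f (i, p + 1) < f (i - 1, p + 2)⁺`, so the strict inequality moves
up the diagonal as long as `f` stays positive on `(i, ·)`. It cannot pass the top, where the
right-hand side is `0`; hence `f` is nonpositive somewhere on the diagonal above `(i, p)`. If
`f (i, p) ≤ 0`, the starting inequality just says `f (i - 1, p + 1) > 0`, and `(i - 1, p + 1)` lies
on the other diagonal through `(i, p)`. The top vertex `p = n` is handled by the glide reflection of
`ℤA_n`, which exchanges up and down.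
-/

/-- The automorphism `(i, p) ↦ (i + p, n + 1 - p)` of the translation quiver `ℤA_n`, used to turn
statements about the part of a sectional path above a vertex into statements about the part below.
It exchanges the two families of maximal sectional paths, and its square is `τ^{-(n+1)}`. It is
encoded as a map on all of `ℤ × ℤ`, preserving the strip `1 ≤ p ≤ n`. -/
def zaGlideReflection (n : ℤ) (x : ℤ × ℤ) : ℤ × ℤ :=
  (x.1 + x.2, n + 1 - x.2)

namespace ZAClusterAdditive

variable {n : ℤ} {f : ℤ × ℤ → ℤ} {i p : ℤ}

theorem comp_zaGlideReflection (hf : ZAClusterAdditive n f) :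
    ZAClusterAdditive n (f ∘ zaGlideReflection n) := by
  intro i p hp hpn
  have mesh := hf (i + p) (n + 1 - p) (by lia) (by lia)
  have two_le_iff : 2 ≤ n + 1 - p ↔ p ≤ n - 1 := by lia
  have le_sub_one_iff : n + 1 - p ≤ n - 1 ↔ 2 ≤ p := by lia
  simp only [two_le_iff, le_sub_one_iff] at mesh
  simp only [Function.comp_apply, zaGlideReflection]
  rw [add_comm (ite _ _ _)] at mesh
  convert mesh using 6 <;> ring_nf

theorem lt_of_posPart_lt (hf : ZAClusterAdditive n f) (hp : 1 ≤ p) (hpn : p < n)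
    (h : max (f (i, p)) 0 < f (i - 1, p + 1)) :
    f (i, p + 1) < if p + 1 < n then max (f (i - 1, p + 2)) 0 else 0 := by
  have mesh := hf i (p + 1) (by lia) (by lia)
  rw [if_pos (by lia), add_sub_cancel_right, add_assoc p 1 1, one_add_one_eq_two] at mesh
  simp only [Int.le_sub_one_iff] at mesh
  linarith

theorem exists_nonpos_of_posPart_lt {p : ℤ} (hf : ZAClusterAdditive n f) (hp : 1 ≤ p)
    (hpn : p < n) (h : max (f (i, p)) 0 < f (i - 1, p + 1)) :
    ∃ q, p < q ∧ q ≤ n ∧ f (i, q) ≤ 0 := by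
  by_cases hnonpos : f (i, p + 1) ≤ 0
  · exact ⟨p + 1, by lia, by lia, hnonpos⟩
  · have hpos : 0 < f (i, p + 1) := not_le.mp hnonpos
    have hlt := hf.lt_of_posPart_lt hp hpn h
    have hpn' : p + 1 < n := by
      by_contra hn
      rw [if_neg hn] at hlt
      exact hpos.not_gt hlt
    have hnext : max (f (i, p + 1)) 0 < f (i - 1, p + 1 + 1) := by
      rw [if_pos hpn'] at hlt
      rw [add_assoc, one_add_one_eq_two, max_eq_left hpos.le]
      exact (lt_max_iff.mp hlt).resolve_right hpos.not_gt
    obtain ⟨q, hpq, hqn, hq⟩ := exists_nonpos_of_posPart_lt hf (by lia) hpn' hnext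
    exact ⟨q, by lia, hqn, hq⟩
termination_by (n - p).toNat

theorem nonpos_or_exists_nonpos_above (hf : ZAClusterAdditive n f) (hp : 1 ≤ p) (hpn : p < n)
    (hz : f (i, p) ≤ 0) :
    f (i - 1, p + 1) ≤ 0 ∨ ∃ q, p < q ∧ q ≤ n ∧ f (i, q) ≤ 0 := by
  refine or_iff_not_imp_left.mpr fun hpos ↦ hf.exists_nonpos_of_posPart_lt hp hpn ?_
  rwa [max_eq_right hz, ← not_le]

theorem nonpos_or_exists_nonpos_below (hf : ZAClusterAdditive n f) (hp : 1 < p) (hpn : p ≤ n)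
    (hz : f (i, p) ≤ 0) :
    f (i, p - 1) ≤ 0 ∨ ∃ q, 1 ≤ q ∧ q < p ∧ f (i + p - q, q) ≤ 0 := by
  have reflect (j q : ℤ) :
      (f ∘ zaGlideReflection n) (j + q - (n + 1), n + 1 - q) = f (j, q) := by
    simp [zaGlideReflection]
  have above := hf.comp_zaGlideReflection.nonpos_or_exists_nonpos_above
    (i := i + p - (n + 1)) (p := n + 1 - p) (by lia) (by lia) (by rwa [reflect])
  refine above.imp (fun h ↦ ?_) fun ⟨q, hpq, hqn, hq⟩ ↦ ⟨n + 1 - q, by lia, by lia, ?_⟩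
  · rw [← reflect]
    convert h using 3 <;> ring
  · rw [← reflect]
    convert hq using 3 <;> ring

end ZAClusterAdditive

theorem stmt_16 (n : ℤ) (hn : 2 ≤ n) (f : ℤ × ℤ → ℤ)
    (hca : ZAClusterAdditive n f)
    (i p : ℤ) (hp1 : 1 ≤ p) (hpn : p ≤ n) (hz : f (i, p) ≤ 0) :
    ∃ z' : ℤ × ℤ, z' ≠ (i, p) ∧ 1 ≤ z'.2 ∧ z'.2 ≤ n ∧ f z' ≤ 0 ∧
      ((∃ q : ℤ, 1 ≤ q ∧ q ≤ n ∧ z' = (i, q)) ∨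
       (∃ q : ℤ, 1 ≤ q ∧ q ≤ n ∧ z' = (i + p - q, q))) := by
  suffices h : ∃ q, q ≠ p ∧ 1 ≤ q ∧ q ≤ n ∧ (f (i, q) ≤ 0 ∨ f (i + p - q, q) ≤ 0) by
    obtain ⟨q, hqp, hq1, hqn, hq | hq⟩ := h
    · exact ⟨(i, q), by simp [hqp], hq1, hqn, hq, .inl ⟨q, hq1, hqn, rfl⟩⟩
    · exact ⟨(i + p - q, q), by simp [hqp], hq1, hqn, hq, .inr ⟨q, hq1, hqn, rfl⟩⟩
  rcases hpn.lt_or_eq with hlt | rfl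
  · rcases hca.nonpos_or_exists_nonpos_above hp1 hlt hz with h | ⟨q, hpq, hqn, hq⟩
    · exact ⟨p + 1, by lia, by lia, by lia, .inr (by rwa [show i + p - (p + 1) = i - 1 by ring])⟩
    · exact ⟨q, by lia, by lia, hqn, .inl hq⟩
  · rcases hca.nonpos_or_exists_nonpos_below (by lia) le_rfl hz with h | ⟨q, hq1, hqp, hq⟩
    · exact ⟨p - 1, by lia, by lia, by lia, .inl h⟩
    · exact ⟨q, by lia, hq1, by lia, .inr hq⟩
end
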